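/- Let w > 0 and suppose u : (0,∞)×(0,w) → ℝ is a translator with boundary value −∞ at (x,0) for every x > 0 and boundary value +∞ at (x,w) for every x > 0. Then the upward unit normal of the graph of u converges to (0,−1,0) uniformly as x → ∞: for every ε > 0 there exists a > 0 such that for all (x,y) with x > a and 0 < y < w, the vector ν(x,y) = (−∂u/∂x(x,y), −∂u/∂y(x,y), 1)/√(1 + |∇u(x,y)|²) satisfies ‖ν(x,y) − (0,−1,0)‖ < ε. -/

import Mathlib

/-! Write `W = √(1 + |∇u|²)` and let `ν` be the upward unit normal. The squared distance of `ν` to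
`(0, -1, 0)` is `2 (1 - u_y / W)`, twice the normal defect, and it has to be shown that the defect
tends to zero uniformly. The argument is quantitative and does not pass to limits of translators.

Flux. The translator equation reads `div (∇u / W) = 1 / W`, so the field `∇u / W - (0, 1)` has
positive divergence, while its vertical component is minus the defect and its horizontal component
is at most the square root of twice the defect. Testing with a long cutoff in `x` and a weight
vanishing at the top bounds the integral of the defect over a box of length `L` by `O(1 / L)`,
independently of the vertical extent; the boundary value `-∞` allows one to cut off at the bottom
without a boundary term. Testing next with a short cutoff in `x` and a nondecreasing cutoff in
`(u - c) / r` shows that the integral of `W - u_y + r² u_y` over the part of the graph at heights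
`c ± r` above `[x₀ - r, x₀ + r]` is at most `ε + 8 r⁴` once `x₀` is large, uniformly in `c`.

From integrals to points. The tilt `(W - u_y) / (W + 1)` is comparable with the defect. Let `L` be
the second order part of the equation, which is `W²` times the drift Laplacian of the graph.
Differentiating the equation gives `L (tilt) ≥ -2`, so the tilt plus the squared distance in `ℝ³` to
a point of the graph is a subsolution near that point. As `(e^u / W) L` is symmetric in divergence
form, Green's identity against a regularized and truncated fundamental solution yields a mean value
inequality on the graph. Both boundary values enter to keep the relevant part of the graph away from
the sides of the strip. There the integrand is at most a constant times that of the flux estimate,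
so the tilt is at most a constant times `(ε + r⁴) / r²`; now take `ε = r⁴` and `r` small. -/

open Real Filter MeasureTheory Set

noncomputable section

/-- Partial derivative with respect to the first variable. -/
def pdx (u : ℝ × ℝ → ℝ) (p : ℝ × ℝ) : ℝ := fderiv ℝ u p (1, 0)

/-- Partial derivative with respect to the second variable. -/
def pdy (u : ℝ × ℝ → ℝ) (p : ℝ × ℝ) : ℝ := fderiv ℝ u p (0, 1)

/-- `u` is a smooth solution of the translator equation
`(1 + u_y²)u_xx − 2u_x u_y u_xy + (1 + u_x²)u_yy = 1 + u_x² + u_y²` on `Ω`. -/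
def IsTranslatorOn (Ω : Set (ℝ × ℝ)) (u : ℝ × ℝ → ℝ) : Prop :=
  ContDiffOn ℝ (⊤ : ℕ∞) u Ω ∧
  ∀ p ∈ Ω,
    (1 + (pdy u p) ^ 2) * pdx (pdx u) p
      - 2 * pdx u p * pdy u p * pdy (pdx u) p
      + (1 + (pdx u p) ^ 2) * pdy (pdy u) p
    = 1 + (pdx u p) ^ 2 + (pdy u p) ^ 2

/-- The open parallelogram `P(α, w, L)`. -/
def Pgram (α w L : ℝ) : Set (ℝ × ℝ) :=
  {p | 0 < p.2 ∧ p.2 < w ∧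
       p.2 * Real.cos α / Real.sin α < p.1 ∧
       p.1 < L + p.2 * Real.cos α / Real.sin α}

/-- `u` is a translator on `P(α,w,L)` with boundary value `−∞` at every point of the
horizontal sides and `+∞` at every point of the nonhorizontal sides. -/
def ScherkBVP (α w L : ℝ) (u : ℝ × ℝ → ℝ) : Prop :=
  IsTranslatorOn (Pgram α w L) u ∧
  (∀ x : ℝ, 0 < x → x < L →
      Tendsto u (nhdsWithin (x, 0) (Pgram α w L)) atBot) ∧
  (∀ x : ℝ, w * Real.cos α / Real.sin α < x → x < L + w * Real.cos α / Real.sin α →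
      Tendsto u (nhdsWithin (x, w) (Pgram α w L)) atBot) ∧
  (∀ y : ℝ, 0 < y → y < w →
      Tendsto u (nhdsWithin (y * Real.cos α / Real.sin α, y) (Pgram α w L)) atTop) ∧
  (∀ y : ℝ, 0 < y → y < w →
      Tendsto u (nhdsWithin (L + y * Real.cos α / Real.sin α, y) (Pgram α w L)) atTop)

/-- The region `Ω(α, w)`: a "parallelogram" whose right-hand side is at infinity. -/
def OmegaReg (α w : ℝ) : Set (ℝ × ℝ) :=
  {p | 0 < p.2 ∧ p.2 < w ∧ p.2 * Real.cos α / Real.sin α < p.1}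

/-- `u` is a translator on `Ω(α,w)` with boundary value `−∞` at every point of the two
horizontal edges and `+∞` at every point of the nonhorizontal edge. -/
def ScherkenoidBVP (α w : ℝ) (u : ℝ × ℝ → ℝ) : Prop :=
  IsTranslatorOn (OmegaReg α w) u ∧
  (∀ x : ℝ, 0 < x → Tendsto u (nhdsWithin (x, 0) (OmegaReg α w)) atBot) ∧
  (∀ x : ℝ, w * Real.cos α / Real.sin α < x →
      Tendsto u (nhdsWithin (x, w) (OmegaReg α w)) atBot) ∧
  (∀ y : ℝ, 0 < y → y < w →
      Tendsto u (nhdsWithin (y * Real.cos α / Real.sin α, y) (OmegaReg α w)) atTop)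

/-- The full strip `ℝ × (0, w)`. -/
def TStrip (w : ℝ) : Set (ℝ × ℝ) := {p | 0 < p.2 ∧ p.2 < w}

/-- The half strip `(0,∞) × (0, w)`. -/
def THalfStrip (w : ℝ) : Set (ℝ × ℝ) := {p | 0 < p.1 ∧ 0 < p.2 ∧ p.2 < w}

/-- A pitchfork function of width `w`: a translator on `ℝ × (0,w)` with boundary value
`+∞` at `(x,0)` for `x < 0`, `−∞` at `(x,0)` for `x > 0`, and `−∞` at `(x,w)` for all `x`. -/
def IsPitchfork (w : ℝ) (u : ℝ × ℝ → ℝ) : Prop :=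
  IsTranslatorOn (TStrip w) u ∧
  (∀ x : ℝ, x < 0 → Tendsto u (nhdsWithin (x, 0) (TStrip w)) atTop) ∧
  (∀ x : ℝ, 0 < x → Tendsto u (nhdsWithin (x, 0) (TStrip w)) atBot) ∧
  (∀ x : ℝ, Tendsto u (nhdsWithin (x, w) (TStrip w)) atBot)

/-- The downward-tilted grim reaper `g_w` of width `w ≥ π`, normalized by `g_w(0,w/2) = 0`. -/
def grimTilt (w : ℝ) (p : ℝ × ℝ) : ℝ :=
  (w / π) ^ 2 * Real.log (Real.sin (π * p.2 / w)) - p.1 * Real.sqrt ((w / π) ^ 2 - 1)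

open scoped Topology

/-! ### Partial derivatives and the divergence theorem on a box -/

/-- `f` is differentiable at `z` with partial derivatives `a` and `b`. Carrying differentiability
along with the values keeps clear of the junk value `0` of `pdx` and `pdy`. -/
def HasPartialsAt (f : ℝ × ℝ → ℝ) (a b : ℝ) (z : ℝ × ℝ) : Prop :=
  HasFDerivAt f (a • ContinuousLinearMap.fst ℝ ℝ ℝ + b • ContinuousLinearMap.snd ℝ ℝ ℝ) z

lemma hasPartialsAt_of_hasFDerivAt {f : ℝ × ℝ → ℝ} {f' : ℝ × ℝ →L[ℝ] ℝ} {a b : ℝ} {z : ℝ × ℝ}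
    (hf : HasFDerivAt f f' z) (ha : f' (1, 0) = a) (hb : f' (0, 1) = b) :
    HasPartialsAt f a b z :=
  hf.congr_fderiv (by ext <;> simp [ha, hb])

lemma hasPartialsAt_of_differentiableAt {f : ℝ × ℝ → ℝ} {z : ℝ × ℝ}
    (hf : DifferentiableAt ℝ f z) : HasPartialsAt f (pdx f z) (pdy f z) z :=
  hasPartialsAt_of_hasFDerivAt hf.hasFDerivAt rfl rfl

namespace HasPartialsAt

variable {f g : ℝ × ℝ → ℝ} {a b a' b' : ℝ} {z : ℝ × ℝ}

lemma pdx_eq (hf : HasPartialsAt f a b z) : pdx f z = a := by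
  simp [pdx, HasFDerivAt.fderiv hf]

lemma pdy_eq (hf : HasPartialsAt f a b z) : pdy f z = b := by
  simp [pdy, HasFDerivAt.fderiv hf]

lemma congr_partials (hf : HasPartialsAt f a b z) (ha : a = a') (hb : b = b') :
    HasPartialsAt f a' b' z :=
  ha ▸ hb ▸ hf

lemma congr_of_eventuallyEq (hf : HasPartialsAt f a b z) (h : g =ᶠ[𝓝 z] f) :
    HasPartialsAt g a b z :=
  HasFDerivAt.congr_of_eventuallyEq hf h

lemma const (c : ℝ) (z : ℝ × ℝ) : HasPartialsAt (fun _ => c) 0 0 z :=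
  hasPartialsAt_of_hasFDerivAt (hasFDerivAt_const c z) rfl rfl

lemma fst (z : ℝ × ℝ) : HasPartialsAt Prod.fst 1 0 z :=
  hasPartialsAt_of_hasFDerivAt hasFDerivAt_fst rfl rfl

lemma snd (z : ℝ × ℝ) : HasPartialsAt Prod.snd 0 1 z :=
  hasPartialsAt_of_hasFDerivAt hasFDerivAt_snd rfl rfl

lemma add (hf : HasPartialsAt f a b z) (hg : HasPartialsAt g a' b' z) :
    HasPartialsAt (fun y => f y + g y) (a + a') (b + b') z :=
  hasPartialsAt_of_hasFDerivAt (HasFDerivAt.add hf hg) (by simp) (by simp)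

lemma sub (hf : HasPartialsAt f a b z) (hg : HasPartialsAt g a' b' z) :
    HasPartialsAt (fun y => f y - g y) (a - a') (b - b') z :=
  hasPartialsAt_of_hasFDerivAt (HasFDerivAt.sub hf hg) (by simp) (by simp)

lemma mul (hf : HasPartialsAt f a b z) (hg : HasPartialsAt g a' b' z) :
    HasPartialsAt (fun y => f y * g y) (f z * a' + g z * a) (f z * b' + g z * b) z :=
  hasPartialsAt_of_hasFDerivAt (HasFDerivAt.mul hf hg) (by simp) (by simp)

lemma const_mul (c : ℝ) (hf : HasPartialsAt f a b z) :
    HasPartialsAt (fun y => c * f y) (c * a) (c * b) z :=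
  ((const c z).mul hf).congr_partials (by ring) (by ring)

lemma comp {φ : ℝ → ℝ} {φ' : ℝ} (hφ : HasDerivAt φ φ' (f z)) (hf : HasPartialsAt f a b z) :
    HasPartialsAt (fun y => φ (f y)) (φ' * a) (φ' * b) z :=
  hasPartialsAt_of_hasFDerivAt (hφ.comp_hasFDerivAt z hf) (by simp) (by simp)

lemma sq (hf : HasPartialsAt f a b z) :
    HasPartialsAt (fun y => f y ^ 2) (2 * f z * a) (2 * f z * b) z :=
  hf.comp (φ := fun t => t ^ 2) (by simpa using hasDerivAt_pow 2 (f z))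

lemma div (hf : HasPartialsAt f a b z) (hg : HasPartialsAt g a' b' z) (hz : g z ≠ 0) :
    HasPartialsAt (fun y => f y / g y)
      ((a * g z - f z * a') / g z ^ 2) ((b * g z - f z * b') / g z ^ 2) z :=
  (hf.mul (hg.comp (hasDerivAt_inv hz))).congr_partials (by field_simp; ring) (by field_simp; ring)

lemma sqrt (hf : HasPartialsAt f a b z) (hz : f z ≠ 0) :
    HasPartialsAt (fun y => √(f y)) (a / (2 * √(f z))) (b / (2 * √(f z))) z :=
  (hf.comp (Real.hasDerivAt_sqrt hz)).congr_partials (by ring) (by ring)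

end HasPartialsAt

lemma contDiffAt_pdx {f : ℝ × ℝ → ℝ} {z : ℝ × ℝ} {m n : WithTop ℕ∞} (hf : ContDiffAt ℝ n f z)
    (hmn : m + 1 ≤ n) : ContDiffAt ℝ m (pdx f) z :=
  (hf.fderiv_right hmn).clm_apply contDiffAt_const

lemma contDiffAt_pdy {f : ℝ × ℝ → ℝ} {z : ℝ × ℝ} {m n : WithTop ℕ∞} (hf : ContDiffAt ℝ n f z)
    (hmn : m + 1 ≤ n) : ContDiffAt ℝ m (pdy f) z :=
  (hf.fderiv_right hmn).clm_apply contDiffAt_const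

lemma hasPartialsAt_of_contDiffAt {f : ℝ × ℝ → ℝ} {z : ℝ × ℝ} {n : WithTop ℕ∞}
    (hf : ContDiffAt ℝ n f z) (hn : n ≠ 0) : HasPartialsAt f (pdx f z) (pdy f z) z :=
  hasPartialsAt_of_differentiableAt (hf.differentiableAt hn)

lemma pdx_pdy_eq_pdy_pdx {f : ℝ × ℝ → ℝ} {z : ℝ × ℝ} (hf : ContDiffAt ℝ 2 f z) :
    pdx (pdy f) z = pdy (pdx f) z := by
  have hf' : DifferentiableAt ℝ (fderiv ℝ f) z :=
    (hf.fderiv_right (m := 1) (by norm_num)).differentiableAt (by norm_num)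
  have apply_eq (v w : ℝ × ℝ) :
      fderiv ℝ (fun y => fderiv ℝ f y v) z w = fderiv ℝ (fderiv ℝ f) z w v := by
    simp [fderiv_clm_apply hf' (differentiableAt_const v)]
  have hsymm : IsSymmSndFDerivAt ℝ f z := hf.isSymmSndFDerivAt (by simp)
  exact (apply_eq _ _).trans ((hsymm _ _).trans (apply_eq _ _).symm)

lemma pdx_congr {f g : ℝ × ℝ → ℝ} {z : ℝ × ℝ} (h : f =ᶠ[𝓝 z] g) : pdx f =ᶠ[𝓝 z] pdx g :=
  h.fderiv.fun_comp (· (1, 0))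

lemma pdy_congr {f g : ℝ × ℝ → ℝ} {z : ℝ × ℝ} (h : f =ᶠ[𝓝 z] g) : pdy f =ᶠ[𝓝 z] pdy g :=
  h.fderiv.fun_comp (· (0, 1))

/-- The divergence of the plane vector field `(V₁, V₂)`. -/
def divergence (V₁ V₂ : ℝ × ℝ → ℝ) (z : ℝ × ℝ) : ℝ := pdx V₁ z + pdy V₂ z

lemma divergence_sub {V₁ V₂ U₁ U₂ : ℝ × ℝ → ℝ} {z : ℝ × ℝ} (hV₁ : DifferentiableAt ℝ V₁ z)
    (hV₂ : DifferentiableAt ℝ V₂ z) (hU₁ : DifferentiableAt ℝ U₁ z)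
    (hU₂ : DifferentiableAt ℝ U₂ z) :
    divergence (fun y => V₁ y - U₁ y) (fun y => V₂ y - U₂ y) z =
      divergence V₁ V₂ z - divergence U₁ U₂ z := by
  rw [divergence,
    ((hasPartialsAt_of_differentiableAt hV₁).sub (hasPartialsAt_of_differentiableAt hU₁)).pdx_eq,
    ((hasPartialsAt_of_differentiableAt hV₂).sub (hasPartialsAt_of_differentiableAt hU₂)).pdy_eq,
    divergence, divergence]
  ring

lemma divergence_smul {f V₁ V₂ : ℝ × ℝ → ℝ} {z : ℝ × ℝ} (hf : DifferentiableAt ℝ f z)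
    (h₁ : DifferentiableAt ℝ V₁ z) (h₂ : DifferentiableAt ℝ V₂ z) :
    divergence (fun y => f y * V₁ y) (fun y => f y * V₂ y) z =
      f z * divergence V₁ V₂ z + (pdx f z * V₁ z + pdy f z * V₂ z) := by
  have hf' := hasPartialsAt_of_differentiableAt hf
  rw [divergence, (hf'.mul (hasPartialsAt_of_differentiableAt h₁)).pdx_eq,
    (hf'.mul (hasPartialsAt_of_differentiableAt h₂)).pdy_eq, divergence]
  ring

section DivergenceTheorem

variable {V₁ V₂ : ℝ × ℝ → ℝ} {a b c d : ℝ}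

lemma continuousOn_divergence {s : Set (ℝ × ℝ)} (h₁ : ∀ z ∈ s, ContDiffAt ℝ 1 V₁ z)
    (h₂ : ∀ z ∈ s, ContDiffAt ℝ 1 V₂ z) : ContinuousOn (divergence V₁ V₂) s := fun z hz =>
  ((contDiffAt_pdx (m := 0) (h₁ z hz) (by simp)).continuousAt.add
    (contDiffAt_pdy (m := 0) (h₂ z hz) (by simp)).continuousAt).continuousWithinAt

lemma integral_divergence_nonpos (hab : a ≤ b) (hcd : c ≤ d)
    (h₁ : ∀ z ∈ Icc a b ×ˢ Icc c d, ContDiffAt ℝ 1 V₁ z)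
    (h₂ : ∀ z ∈ Icc a b ×ˢ Icc c d, ContDiffAt ℝ 1 V₂ z)
    (hleft : ∀ y ∈ Icc c d, 0 ≤ V₁ (a, y)) (hright : ∀ y ∈ Icc c d, V₁ (b, y) ≤ 0)
    (hbot : ∀ x ∈ Icc a b, 0 ≤ V₂ (x, c)) (htop : ∀ x ∈ Icc a b, V₂ (x, d) ≤ 0) :
    ∫ z in Icc a b ×ˢ Icc c d, divergence V₁ V₂ z ≤ 0 := by
  have interior_sub {z : ℝ × ℝ} (hz : z ∈ Ioo a b ×ˢ Ioo c d) : z ∈ Icc a b ×ˢ Icc c d :=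
    prod_mono Ioo_subset_Icc_self Ioo_subset_Icc_self hz
  rw [Icc_prod_Icc]
  refine (integral_divergence_prod_Icc_of_hasFDerivAt_of_le V₁ V₂ (fderiv ℝ V₁) (fderiv ℝ V₂)
    (a, c) (b, d) ⟨hab, hcd⟩ ?_ ?_
    (fun z hz => ((h₁ z (interior_sub hz)).differentiableAt (by simp)).hasFDerivAt)
    (fun z hz => ((h₂ z (interior_sub hz)).differentiableAt (by simp)).hasFDerivAt) ?_).trans_le ?_
  · rw [← Icc_prod_Icc]
    exact fun z hz => (h₁ z hz).continuousAt.continuousWithinAt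
  · rw [← Icc_prod_Icc]
    exact fun z hz => (h₂ z hz).continuousAt.continuousWithinAt
  · rw [← Icc_prod_Icc]
    exact (continuousOn_divergence h₁ h₂).integrableOn_compact (isCompact_Icc.prod isCompact_Icc)
  · have htop' : ∫ x in a..b, V₂ (x, d) ≤ 0 := by
      rw [← neg_nonneg, ← intervalIntegral.integral_neg]
      exact intervalIntegral.integral_nonneg hab fun x hx => neg_nonneg.2 (htop x hx)
    have hright' : ∫ y in c..d, V₁ (b, y) ≤ 0 := by
      rw [← neg_nonneg, ← intervalIntegral.integral_neg]
      exact intervalIntegral.integral_nonneg hcd fun y hy => neg_nonneg.2 (hright y hy)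
    have hbot' := intervalIntegral.integral_nonneg (μ := volume) hab hbot
    have hleft' := intervalIntegral.integral_nonneg (μ := volume) hcd hleft
    dsimp only
    linarith

lemma setIntegral_le_of_le_divergence_add {g K : ℝ × ℝ → ℝ} {B : Set (ℝ × ℝ)}
    (hab : a ≤ b) (hcd : c ≤ d)
    (h₁ : ∀ z ∈ Icc a b ×ˢ Icc c d, ContDiffAt ℝ 1 V₁ z)
    (h₂ : ∀ z ∈ Icc a b ×ˢ Icc c d, ContDiffAt ℝ 1 V₂ z)
    (hleft : ∀ y ∈ Icc c d, 0 ≤ V₁ (a, y)) (hright : ∀ y ∈ Icc c d, V₁ (b, y) ≤ 0)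
    (hbot : ∀ x ∈ Icc a b, 0 ≤ V₂ (x, c)) (htop : ∀ x ∈ Icc a b, V₂ (x, d) ≤ 0)
    (hB : MeasurableSet B) (hBR : B ⊆ Icc a b ×ˢ Icc c d) (hg : IntegrableOn g B)
    (hK : ContinuousOn K (Icc a b ×ˢ Icc c d))
    (hnonneg : ∀ z ∈ Icc a b ×ˢ Icc c d, 0 ≤ divergence V₁ V₂ z + K z)
    (hle : ∀ z ∈ B, g z ≤ divergence V₁ V₂ z + K z) :
    ∫ z in B, g z ≤ ∫ z in Icc a b ×ˢ Icc c d, K z := by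
  have hR : IsCompact (Icc a b ×ˢ Icc c d) := isCompact_Icc.prod isCompact_Icc
  have hdiv := (continuousOn_divergence h₁ h₂).integrableOn_compact hR (μ := volume)
  have hK' := hK.integrableOn_compact hR (μ := volume)
  have hsum : IntegrableOn (fun z => divergence V₁ V₂ z + K z) (Icc a b ×ˢ Icc c d) := hdiv.add hK'
  calc ∫ z in B, g z ≤ ∫ z in B, (divergence V₁ V₂ z + K z) :=
        setIntegral_mono_on hg (hsum.mono_set hBR) hB hle
    _ ≤ ∫ z in Icc a b ×ˢ Icc c d, (divergence V₁ V₂ z + K z) :=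
        setIntegral_mono_set hsum
          ((ae_restrict_iff' hR.measurableSet).2 (ae_of_all _ hnonneg)) hBR.eventuallyLE
    _ = (∫ z in Icc a b ×ˢ Icc c d, divergence V₁ V₂ z) + ∫ z in Icc a b ×ˢ Icc c d, K z :=
        integral_add hdiv hK'
    _ ≤ ∫ z in Icc a b ×ˢ Icc c d, K z :=
        add_le_of_nonpos_left (integral_divergence_nonpos hab hcd h₁ h₂ hleft hright hbot htop)

end DivergenceTheorem

/-! ### The translator operator -/

/-- The area element `W = √(1 + |∇u|²)` of the graph of `u`. -/
def areaElement (u : ℝ × ℝ → ℝ) (z : ℝ × ℝ) : ℝ := √(1 + pdx u z ^ 2 + pdy u z ^ 2)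

/-- The linear operator `L f = (1 + u_y²) f_xx − 2 u_x u_y f_xy + (1 + u_x²) f_yy`, which is `W²`
times the drift Laplacian of the graph of `u` when `u` is a translator. The translator equation
reads `L u = W²`. -/
def translatorOp (u f : ℝ × ℝ → ℝ) (z : ℝ × ℝ) : ℝ :=
  (1 + pdy u z ^ 2) * pdx (pdx f) z - 2 * pdx u z * pdy u z * pdy (pdx f) z
    + (1 + pdx u z ^ 2) * pdy (pdy f) z

/-- The bilinear form in `∇f`, `∇g` with the coefficient matrix of `translatorOp u`. -/
def translatorForm (u f g : ℝ × ℝ → ℝ) (z : ℝ × ℝ) : ℝ :=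
  (1 + pdy u z ^ 2) * (pdx f z * pdx g z)
    - pdx u z * pdy u z * (pdx f z * pdy g z + pdy f z * pdx g z)
    + (1 + pdx u z ^ 2) * (pdy f z * pdy g z)

section AreaElement

variable {u : ℝ × ℝ → ℝ} {z : ℝ × ℝ}

lemma areaElement_sq (u : ℝ × ℝ → ℝ) (z : ℝ × ℝ) :
    areaElement u z ^ 2 = 1 + pdx u z ^ 2 + pdy u z ^ 2 :=
  Real.sq_sqrt (by positivity)

lemma one_le_areaElement (u : ℝ × ℝ → ℝ) (z : ℝ × ℝ) : 1 ≤ areaElement u z :=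
  Real.one_le_sqrt.2 (by linarith [sq_nonneg (pdx u z), sq_nonneg (pdy u z)])

lemma areaElement_pos (u : ℝ × ℝ → ℝ) (z : ℝ × ℝ) : 0 < areaElement u z :=
  zero_lt_one.trans_le (one_le_areaElement u z)

lemma abs_pdy_lt_areaElement (u : ℝ × ℝ → ℝ) (z : ℝ × ℝ) : |pdy u z| < areaElement u z :=
  abs_lt_of_sq_lt_sq (by rw [areaElement_sq]; linarith [sq_nonneg (pdx u z)])
    (areaElement_pos u z).le

lemma contDiffAt_areaElement {m n : WithTop ℕ∞} (hu : ContDiffAt ℝ n u z) (hmn : m + 1 ≤ n) :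
    ContDiffAt ℝ m (areaElement u) z :=
  ((contDiffAt_const.add ((contDiffAt_pdx hu hmn).pow 2)).add
    ((contDiffAt_pdy hu hmn).pow 2)).sqrt (by positivity)

lemma hasPartialsAt_pdx (hu : ContDiffAt ℝ 2 u z) :
    HasPartialsAt (pdx u) (pdx (pdx u) z) (pdy (pdx u) z) z :=
  hasPartialsAt_of_contDiffAt (n := 1) (contDiffAt_pdx hu (by norm_num)) (by norm_num)

lemma hasPartialsAt_pdy (hu : ContDiffAt ℝ 2 u z) :
    HasPartialsAt (pdy u) (pdy (pdx u) z) (pdy (pdy u) z) z :=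
  (hasPartialsAt_of_contDiffAt (n := 1) (contDiffAt_pdy hu (by norm_num))
    (by norm_num)).congr_partials (pdx_pdy_eq_pdy_pdx hu) rfl

lemma hasPartialsAt_areaElement (hu : ContDiffAt ℝ 2 u z) :
    HasPartialsAt (areaElement u)
      ((pdx u z * pdx (pdx u) z + pdy u z * pdy (pdx u) z) / areaElement u z)
      ((pdx u z * pdy (pdx u) z + pdy u z * pdy (pdy u) z) / areaElement u z) z := by
  have hW := (((HasPartialsAt.const 1 z).add (hasPartialsAt_pdx hu).sq).add
    (hasPartialsAt_pdy hu).sq).sqrt (by positivity)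
  refine hW.congr_partials ?_ ?_ <;> change _ / (2 * areaElement u z) = _ <;> ring

end AreaElement

section TranslatorOp

variable {u f g : ℝ × ℝ → ℝ} {z : ℝ × ℝ}

lemma translatorOp_eq_of_hasPartialsAt {fx fy : ℝ × ℝ → ℝ} {fxx fxy fyx fyy : ℝ}
    (hf : ∀ᶠ y in 𝓝 z, HasPartialsAt f (fx y) (fy y) y) (hx : HasPartialsAt fx fxx fxy z)
    (hy : HasPartialsAt fy fyx fyy z) :
    translatorOp u f z = (1 + pdy u z ^ 2) * fxx - 2 * pdx u z * pdy u z * fxy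
      + (1 + pdx u z ^ 2) * fyy := by
  have hx' := hx.congr_of_eventuallyEq (hf.mono fun _ h => h.pdx_eq)
  have hy' := hy.congr_of_eventuallyEq (hf.mono fun _ h => h.pdy_eq)
  rw [translatorOp, hx'.pdx_eq, hx'.pdy_eq, hy'.pdy_eq]

lemma eventually_hasPartialsAt (hf : ContDiffAt ℝ 2 f z) :
    ∀ᶠ y in 𝓝 z, HasPartialsAt f (pdx f y) (pdy f y) y :=
  (hf.eventually (by simp)).mono fun _ h => hasPartialsAt_of_contDiffAt h (by norm_num)

lemma translatorOp_congr (h : f =ᶠ[𝓝 z] g) : translatorOp u f z = translatorOp u g z := by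
  rw [translatorOp, (pdx_congr (pdx_congr h)).eq_of_nhds, (pdy_congr (pdx_congr h)).eq_of_nhds,
    (pdy_congr (pdy_congr h)).eq_of_nhds, translatorOp]

lemma translatorOp_const (c : ℝ) : translatorOp u (fun _ => c) z = 0 := by
  rw [translatorOp_eq_of_hasPartialsAt (Eventually.of_forall (HasPartialsAt.const c))
    (HasPartialsAt.const 0 z) (HasPartialsAt.const 0 z)]
  ring

lemma translatorOp_add (hf : ContDiffAt ℝ 2 f z) (hg : ContDiffAt ℝ 2 g z) :
    translatorOp u (fun y => f y + g y) z = translatorOp u f z + translatorOp u g z := by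
  rw [translatorOp_eq_of_hasPartialsAt
    ((eventually_hasPartialsAt hf).and (eventually_hasPartialsAt hg) |>.mono
      fun _ h => h.1.add h.2)
    ((hasPartialsAt_pdx hf).add (hasPartialsAt_pdx hg))
    ((hasPartialsAt_pdy hf).add (hasPartialsAt_pdy hg)), translatorOp, translatorOp]
  ring

lemma translatorOp_sub (hf : ContDiffAt ℝ 2 f z) (hg : ContDiffAt ℝ 2 g z) :
    translatorOp u (fun y => f y - g y) z = translatorOp u f z - translatorOp u g z := by
  rw [translatorOp_eq_of_hasPartialsAt
    ((eventually_hasPartialsAt hf).and (eventually_hasPartialsAt hg) |>.mono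
      fun _ h => h.1.sub h.2)
    ((hasPartialsAt_pdx hf).sub (hasPartialsAt_pdx hg))
    ((hasPartialsAt_pdy hf).sub (hasPartialsAt_pdy hg)), translatorOp, translatorOp]
  ring

lemma translatorOp_mul (hf : ContDiffAt ℝ 2 f z) (hg : ContDiffAt ℝ 2 g z) :
    translatorOp u (fun y => f y * g y) z =
      f z * translatorOp u g z + g z * translatorOp u f z + 2 * translatorForm u f g z := by
  have hf' := hasPartialsAt_of_contDiffAt hf (by norm_num)
  have hg' := hasPartialsAt_of_contDiffAt hg (by norm_num)
  rw [translatorOp_eq_of_hasPartialsAt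
    ((eventually_hasPartialsAt hf).and (eventually_hasPartialsAt hg) |>.mono
      fun _ h => h.1.mul h.2)
    ((hf'.mul (hasPartialsAt_pdx hg)).add (hg'.mul (hasPartialsAt_pdx hf)))
    ((hf'.mul (hasPartialsAt_pdy hg)).add (hg'.mul (hasPartialsAt_pdy hf))),
    translatorOp, translatorOp, translatorForm]
  ring

lemma translatorOp_comp (hf : ContDiffAt ℝ 2 f z) {φ φ' : ℝ → ℝ} {φ'' : ℝ}
    (hφ : ∀ᶠ t in 𝓝 (f z), HasDerivAt φ (φ' t) t) (hφ' : HasDerivAt φ' φ'' (f z)) :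
    translatorOp u (fun y => φ (f y)) z =
      φ' (f z) * translatorOp u f z + φ'' * translatorForm u f f z := by
  have hf' := hasPartialsAt_of_contDiffAt hf (by norm_num)
  rw [translatorOp_eq_of_hasPartialsAt
    ((hf.continuousAt.eventually hφ).and (eventually_hasPartialsAt hf) |>.mono
      fun _ h => h.2.comp h.1)
    ((hf'.comp hφ').mul (hasPartialsAt_pdx hf)) ((hf'.comp hφ').mul (hasPartialsAt_pdy hf)),
    translatorOp, translatorForm]
  ring

end TranslatorOp

/-! ### The tilt of the normal is almost a subsolution -/

/-- The tilt `(W − u_y) / (W + 1) = (1 + ν_y) / (1 + ν_z)` of the graph of `u`, where `ν` is the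
upward unit normal. It is comparable with `|ν − (0, −1, 0)|²`. -/
def tilt (u : ℝ × ℝ → ℝ) (z : ℝ × ℝ) : ℝ :=
  (areaElement u z - pdy u z) / (areaElement u z + 1)

/-- The determinant of the Hessian of `u`. -/
def hessDet (u : ℝ × ℝ → ℝ) (z : ℝ × ℝ) : ℝ :=
  pdx (pdx u) z * pdy (pdy u) z - pdy (pdx u) z ^ 2

/-- The value of the Hessian of `u` on the vector `∇u`. -/
def hessGrad (u : ℝ × ℝ → ℝ) (z : ℝ × ℝ) : ℝ :=
  pdx u z ^ 2 * pdx (pdx u) z + 2 * pdx u z * pdy u z * pdy (pdx u) z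
    + pdy u z ^ 2 * pdy (pdy u) z

section SmoothFunction

variable {u : ℝ × ℝ → ℝ} {z : ℝ × ℝ}

lemma tilt_pos (u : ℝ × ℝ → ℝ) (z : ℝ × ℝ) : 0 < tilt u z :=
  div_pos (sub_pos.2 (abs_lt.1 (abs_pdy_lt_areaElement u z)).2)
    (by linarith [areaElement_pos u z])

lemma tilt_mul_areaElement_add_one (u : ℝ × ℝ → ℝ) (z : ℝ × ℝ) :
    tilt u z * (areaElement u z + 1) = areaElement u z - pdy u z :=
  div_mul_cancel₀ _ (by linarith [areaElement_pos u z])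

lemma contDiffAt_tilt {m n : WithTop ℕ∞} (hu : ContDiffAt ℝ n u z) (hmn : m + 1 ≤ n) :
    ContDiffAt ℝ m (tilt u) z :=
  ((contDiffAt_areaElement hu hmn).sub (contDiffAt_pdy hu hmn)).div
    ((contDiffAt_areaElement hu hmn).add contDiffAt_const) (by linarith [areaElement_pos u z])

lemma hasPartialsAt_translatorOp_sub (hu : ContDiffAt ℝ 3 u z) :
    HasPartialsAt (fun y => translatorOp u u y - areaElement u y ^ 2)
      (translatorOp u (pdx u) z + 2 * pdx u z * hessDet u z
        - 2 * (pdx u z * pdx (pdx u) z + pdy u z * pdy (pdx u) z))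
      (translatorOp u (pdy u) z + 2 * pdy u z * hessDet u z
        - 2 * (pdx u z * pdy (pdx u) z + pdy u z * pdy (pdy u) z)) z := by
  have hu₂ : ContDiffAt ℝ 2 u z := hu.of_le (by norm_num)
  have hp₂ : ContDiffAt ℝ 2 (pdx u) z := contDiffAt_pdx hu (by norm_num)
  have hq₂ : ContDiffAt ℝ 2 (pdy u) z := contDiffAt_pdy hu (by norm_num)
  have hp := hasPartialsAt_pdx hu₂
  have hq := hasPartialsAt_pdy hu₂
  have hr := hasPartialsAt_pdx hp₂
  have hs := hasPartialsAt_pdy hp₂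
  have ht := hasPartialsAt_pdy hq₂
  have hsymm : pdx (pdy u) =ᶠ[𝓝 z] pdy (pdx u) :=
    (hu₂.eventually (by simp)).mono fun _ => pdx_pdy_eq_pdy_pdx
  have hpyy : pdy (pdx (pdy u)) z = pdy (pdy (pdx u)) z := (pdy_congr hsymm).eq_of_nhds
  have hpxy : pdx (pdx (pdy u)) z = pdy (pdx (pdx u)) z :=
    (pdx_congr hsymm).eq_of_nhds.trans hs.pdx_eq
  have key := ((((((HasPartialsAt.const 1 z).add hq.sq).mul hr).sub
    (((hp.const_mul 2).mul hq).mul hs)).add (((HasPartialsAt.const 1 z).add hp.sq).mul ht)).sub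
    (((HasPartialsAt.const 1 z).add hp.sq).add hq.sq))
  refine (key.congr_of_eventuallyEq (Eventually.of_forall fun y => ?_)).congr_partials ?_ ?_
  · rw [translatorOp, areaElement_sq]
  · rw [translatorOp, hessDet, ← hpyy]
    ring
  · rw [translatorOp, hessDet, hpxy, ← hpyy]
    ring

lemma areaElement_mul_translatorOp_areaElement_add (hu : ContDiffAt ℝ 3 u z) :
    areaElement u z * translatorOp u (areaElement u) z
        + translatorForm u (areaElement u) (areaElement u) z =
      pdx u z * translatorOp u (pdx u) z + pdy u z * translatorOp u (pdy u) z
        + translatorForm u (pdx u) (pdx u) z + translatorForm u (pdy u) (pdy u) z := by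
  have hp : ContDiffAt ℝ 2 (pdx u) z := contDiffAt_pdx hu (by norm_num)
  have hq : ContDiffAt ℝ 2 (pdy u) z := contDiffAt_pdy hu (by norm_num)
  have hW : ContDiffAt ℝ 2 (areaElement u) z := contDiffAt_areaElement hu (by norm_num)
  have hconst : ContDiffAt ℝ 2 (fun _ : ℝ × ℝ => (1 : ℝ)) z := contDiffAt_const
  have hsq : translatorOp u (fun y => areaElement u y * areaElement u y) z =
      translatorOp u (fun y => 1 + pdx u y * pdx u y + pdy u y * pdy u y) z :=
    translatorOp_congr (Eventually.of_forall fun y => by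
      linear_combination areaElement_sq u y)
  rw [translatorOp_mul hW hW, translatorOp_add (hconst.add (hp.mul hp)) (hq.mul hq),
    translatorOp_add hconst (hp.mul hp), translatorOp_const, translatorOp_mul hp hp,
    translatorOp_mul hq hq] at hsq
  linear_combination hsq / 2

lemma areaElement_add_one_mul_translatorOp_tilt (hu : ContDiffAt ℝ 3 u z) :
    (areaElement u z + 1) * translatorOp u (tilt u) z =
      (1 - tilt u z) * translatorOp u (areaElement u) z - translatorOp u (pdy u) z
        - 2 * translatorForm u (tilt u) (areaElement u) z := by
  have hq : ContDiffAt ℝ 2 (pdy u) z := contDiffAt_pdy hu (by norm_num)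
  have hW : ContDiffAt ℝ 2 (areaElement u) z := contDiffAt_areaElement hu (by norm_num)
  have htilt : ContDiffAt ℝ 2 (tilt u) z := contDiffAt_tilt hu (by norm_num)
  have hmul : translatorOp u (fun y => tilt u y * areaElement u y + tilt u y) z =
      translatorOp u (fun y => areaElement u y - pdy u y) z :=
    translatorOp_congr (Eventually.of_forall fun y => by
      linear_combination tilt_mul_areaElement_add_one u y)
  rw [translatorOp_add (htilt.mul hW) htilt, translatorOp_mul htilt hW,
    translatorOp_sub hW hq] at hmul
  linear_combination hmul

end SmoothFunction

section Translator

variable {Ω : Set (ℝ × ℝ)} {u : ℝ × ℝ → ℝ} {z : ℝ × ℝ}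

lemma IsTranslatorOn.contDiffAt (hu : IsTranslatorOn Ω u) (hz : Ω ∈ 𝓝 z) : ContDiffAt ℝ 3 u z :=
  (hu.1.contDiffAt hz).of_le (WithTop.coe_le_coe.2 le_top)

lemma IsTranslatorOn.translatorOp_self (hu : IsTranslatorOn Ω u) (hz : z ∈ Ω) :
    translatorOp u u z = areaElement u z ^ 2 :=
  (hu.2 z hz).trans (areaElement_sq u z).symm

lemma IsTranslatorOn.hasPartialsAt_translatorOp_sub (hu : IsTranslatorOn Ω u) (hz : Ω ∈ 𝓝 z) :
    HasPartialsAt (fun y => translatorOp u u y - areaElement u y ^ 2) 0 0 z :=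
  (HasPartialsAt.const 0 z).congr_of_eventuallyEq (by
    filter_upwards [hz] with y hy using sub_eq_zero.2 (hu.translatorOp_self hy))

lemma IsTranslatorOn.translatorOp_pdx (hu : IsTranslatorOn Ω u) (hz : Ω ∈ 𝓝 z) :
    translatorOp u (pdx u) z =
      2 * (pdx u z * pdx (pdx u) z + pdy u z * pdy (pdx u) z) - 2 * pdx u z * hessDet u z := by
  linear_combination (_root_.hasPartialsAt_translatorOp_sub (hu.contDiffAt hz)).pdx_eq.symm.trans
    (hu.hasPartialsAt_translatorOp_sub hz).pdx_eq

lemma IsTranslatorOn.translatorOp_pdy (hu : IsTranslatorOn Ω u) (hz : Ω ∈ 𝓝 z) :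
    translatorOp u (pdy u) z =
      2 * (pdx u z * pdy (pdx u) z + pdy u z * pdy (pdy u) z) - 2 * pdy u z * hessDet u z := by
  linear_combination (_root_.hasPartialsAt_translatorOp_sub (hu.contDiffAt hz)).pdy_eq.symm.trans
    (hu.hasPartialsAt_translatorOp_sub hz).pdy_eq

lemma IsTranslatorOn.translatorForm_areaElement_areaElement (hu : IsTranslatorOn Ω u)
    (hz : Ω ∈ 𝓝 z) :
    translatorForm u (areaElement u) (areaElement u) z =
      hessGrad u z - hessDet u z * (areaElement u z ^ 2 - 1) := by
  have hW := hasPartialsAt_areaElement ((hu.contDiffAt hz).of_le (by norm_num))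
  have hW0 := (areaElement_pos u z).ne'
  rw [translatorForm, hW.pdx_eq, hW.pdy_eq]
  field_simp
  rw [areaElement_sq, hessGrad, hessDet]
  linear_combination (pdx u z ^ 2 * pdx (pdx u) z + 2 * pdx u z * pdy u z * pdy (pdx u) z
    + pdy u z ^ 2 * pdy (pdy u) z) * hu.2 z (mem_of_mem_nhds hz)

lemma IsTranslatorOn.translatorForm_areaElement_pdy (hu : IsTranslatorOn Ω u) (hz : Ω ∈ 𝓝 z) :
    translatorForm u (areaElement u) (pdy u) z =
      areaElement u z * (pdx u z * pdy (pdx u) z + pdy u z * pdy (pdy u) z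
        - hessDet u z * pdy u z) := by
  have hu₂ : ContDiffAt ℝ 2 u z := (hu.contDiffAt hz).of_le (by norm_num)
  have hW := hasPartialsAt_areaElement hu₂
  have hq := hasPartialsAt_pdy hu₂
  have hW0 := (areaElement_pos u z).ne'
  rw [translatorForm, hW.pdx_eq, hW.pdy_eq, hq.pdx_eq, hq.pdy_eq]
  field_simp
  rw [areaElement_sq, hessDet]
  linear_combination (pdx u z * pdy (pdx u) z + pdy u z * pdy (pdy u) z)
    * hu.2 z (mem_of_mem_nhds hz)

lemma IsTranslatorOn.areaElement_mul_translatorOp_areaElement (hu : IsTranslatorOn Ω u)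
    (hz : Ω ∈ 𝓝 z) :
    areaElement u z * translatorOp u (areaElement u) z =
      2 * hessGrad u z + areaElement u z ^ 2 * (1 - 2 * hessDet u z) := by
  have hu₂ : ContDiffAt ℝ 2 u z := (hu.contDiffAt hz).of_le (by norm_num)
  have hform : translatorForm u (pdx u) (pdx u) z + translatorForm u (pdy u) (pdy u) z =
      (pdx (pdx u) z + pdy (pdy u) z) * areaElement u z ^ 2
        - hessDet u z * (1 + areaElement u z ^ 2) := by
    rw [translatorForm, translatorForm, (hasPartialsAt_pdy hu₂).pdx_eq, areaElement_sq, hessDet]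
    linear_combination (pdx (pdx u) z + pdy (pdy u) z) * hu.2 z (mem_of_mem_nhds hz)
  have hid := areaElement_mul_translatorOp_areaElement_add (hu.contDiffAt hz)
  rw [hu.translatorForm_areaElement_areaElement hz, hu.translatorOp_pdx hz,
    hu.translatorOp_pdy hz] at hid
  have hE := hu.2 z (mem_of_mem_nhds hz)
  rw [← sub_eq_zero] at hform
  rw [areaElement_sq] at *
  unfold hessGrad at *
  linear_combination hid + hform + hE

lemma IsTranslatorOn.translatorForm_tilt_areaElement (hu : IsTranslatorOn Ω u) (hz : Ω ∈ 𝓝 z) :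
    (areaElement u z + 1) * translatorForm u (tilt u) (areaElement u) z =
      (1 - tilt u z) * (hessGrad u z - hessDet u z * (areaElement u z ^ 2 - 1))
        - areaElement u z * (pdx u z * pdy (pdx u) z + pdy u z * pdy (pdy u) z
          - hessDet u z * pdy u z) := by
  have hu₂ : ContDiffAt ℝ 2 u z := (hu.contDiffAt hz).of_le (by norm_num)
  have hW := hasPartialsAt_areaElement hu₂
  have hq := hasPartialsAt_pdy hu₂
  have hW0 : areaElement u z + 1 ≠ 0 := by linarith [areaElement_pos u z]
  have htilt := (hW.sub hq).div (hW.add (HasPartialsAt.const 1 z)) hW0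
  rw [← hu.translatorForm_areaElement_areaElement hz, ← hu.translatorForm_areaElement_pdy hz]
  rw [translatorForm, show pdx (tilt u) z = _ from htilt.pdx_eq,
    show pdy (tilt u) z = _ from htilt.pdy_eq, ← hW.pdx_eq, ← hW.pdy_eq, translatorForm,
    translatorForm, ← hq.pdx_eq, tilt]
  field_simp
  ring

lemma IsTranslatorOn.translatorOp_tilt (hu : IsTranslatorOn Ω u) (hz : Ω ∈ 𝓝 z) :
    (areaElement u z + 1) ^ 2 * translatorOp u (tilt u) z =
      areaElement u z * (1 + pdy u z) - 2 * hessDet u z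
        - 2 * (pdx u z * pdy (pdx u) z + pdy u z * pdy (pdy u) z)
        + 2 * (1 + pdy u z) * hessGrad u z / (areaElement u z * (areaElement u z + 1)) := by
  have hW := areaElement_pos u z
  have htilt : 1 - tilt u z = (1 + pdy u z) / (areaElement u z + 1) := by
    rw [tilt]
    field_simp
    ring
  have hLW : translatorOp u (areaElement u) z =
      (2 * hessGrad u z + areaElement u z ^ 2 * (1 - 2 * hessDet u z)) / areaElement u z := by
    rw [eq_div_iff hW.ne', mul_comm, hu.areaElement_mul_translatorOp_areaElement hz]
  have hLf := areaElement_add_one_mul_translatorOp_tilt (hu.contDiffAt hz)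
  rw [hu.translatorOp_pdy hz, hLW, htilt] at hLf
  have hform := hu.translatorForm_tilt_areaElement hz
  rw [htilt] at hform
  field_simp at hLf hform ⊢
  linear_combination (areaElement u z + 1) * hLf - 2 * areaElement u z * hform

section HessianInequality

variable {p q W : ℝ}

/-- In the coordinates `τ = -γ / (1 + q ^ 2)` and `b = β - p q τ` on the matrices with the given
vanishing trace, the right hand side is the norm `16 W ^ 2 ((W τ) ^ 2 + b ^ 2)`, and the linear form
is `2 W (k (W τ) + p l b)` with `k ^ 2 + (p l) ^ 2 = 2 (W - q) (W - 1) / W ^ 2 ≤ 4`. -/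
lemma sq_tracefree_form_le {α β γ : ℝ} (hW : W ^ 2 = 1 + p ^ 2 + q ^ 2) (hW0 : 0 < W)
    (hqW : |q| < W) (htrace : (1 + q ^ 2) * α - 2 * p * q * β + (1 + p ^ 2) * γ = 0) :
    (2 * (1 + q) * (p ^ 2 * α + 2 * p * q * β + q ^ 2 * γ) / (W * (W + 1))
      - 2 * (p * β + q * γ)) ^ 2 ≤ 16 * W ^ 2 * (β ^ 2 - α * γ) := by
  obtain ⟨τ, rfl⟩ : ∃ τ, γ = -(1 + q ^ 2) * τ := ⟨-γ / (1 + q ^ 2), by field_simp⟩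
  obtain ⟨b, rfl⟩ : ∃ b, β = b - p * q * τ := ⟨β + p * q * τ, by ring⟩
  have hα : α = ((1 + p ^ 2) * τ + 2 * p * q * (b - p * q * τ) / (1 + q ^ 2)) := by
    field_simp
    linear_combination htrace
  set k := q + (1 + q) * (p ^ 2 - q ^ 2 * W ^ 2) / ((1 + q ^ 2) * W * (W + 1)) with hk
  set l := -1 / W + 2 * q * (1 + q) / ((1 + q ^ 2) * (W + 1)) with hl
  have hp : p ^ 2 = W ^ 2 - 1 - q ^ 2 := by linarith
  have hform : 2 * (1 + q) * (p ^ 2 * α + 2 * p * q * (b - p * q * τ)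
        + q ^ 2 * (-(1 + q ^ 2) * τ)) / (W * (W + 1))
      - 2 * (p * (b - p * q * τ) + q * (-(1 + q ^ 2) * τ)) =
      2 * W * (k * (W * τ) + p * l * b) := by
    have hgrad : p ^ 2 * α + 2 * p * q * (b - p * q * τ) + q ^ 2 * (-(1 + q ^ 2) * τ) =
        W ^ 2 * ((p ^ 2 - q ^ 2 * W ^ 2) * τ + 2 * p * q * b) / (1 + q ^ 2) := by
      rw [hα, hW]
      field_simp
      ring
    have hy : p * (b - p * q * τ) + q * (-(1 + q ^ 2) * τ) = p * b - q * W ^ 2 * τ := by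
      rw [hW]
      ring
    rw [hgrad, hy, hk, hl]
    field_simp
    ring
  have hdet : (b - p * q * τ) ^ 2 - α * (-(1 + q ^ 2) * τ) = (W * τ) ^ 2 + b ^ 2 := by
    rw [hα, mul_pow, hW]
    field_simp
    ring
  have hkl : k ^ 2 + (p * l) ^ 2 = 2 * (W - q) * (W - 1) / W ^ 2 := by
    rw [mul_pow, hk, hl, hp]
    field_simp
    ring
  have hkl4 : k ^ 2 + (p * l) ^ 2 ≤ 4 := by
    rw [hkl, div_le_iff₀ (by positivity)]
    linarith [mul_pos hW0 (by linarith [(abs_lt.1 hqW).1] : 0 < W + q), (abs_lt.1 hqW).2]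
  have hCauchy : (k * (W * τ) + p * l * b) ^ 2 ≤ 4 * ((W * τ) ^ 2 + b ^ 2) := by
    linarith [sq_nonneg (k * b - p * l * (W * τ)), mul_nonneg (sub_nonneg.2 hkl4)
      (by positivity : 0 ≤ (W * τ) ^ 2 + b ^ 2)]
  rw [hform, hdet]
  nlinarith [mul_le_mul_of_nonneg_left hCauchy (sq_nonneg W)]

/-- The Hessian of a translator is half the metric of the graph plus a trace-free matrix with
entries `α`, `β`, `γ`. The metric contributes `W ^ 2 / 2` to the right hand side, and minus the
determinant of the trace-free part absorbs the linear terms. -/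
lemma neg_sq_le_of_translator_equation {r s t : ℝ} (hW : W ^ 2 = 1 + p ^ 2 + q ^ 2) (hW0 : 0 < W)
    (hqW : |q| < W)
    (heq : (1 + q ^ 2) * r - 2 * p * q * s + (1 + p ^ 2) * t = 1 + p ^ 2 + q ^ 2) :
    -(3 / 2) * W ^ 2 ≤ W * (1 + q) - 2 * (r * t - s ^ 2) - 2 * (p * s + q * t)
      + 2 * (1 + q) * (p ^ 2 * r + 2 * p * q * s + q ^ 2 * t) / (W * (W + 1)) := by
  obtain ⟨α, rfl⟩ : ∃ α, r = (1 + p ^ 2) / 2 + α := ⟨r - (1 + p ^ 2) / 2, by ring⟩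
  obtain ⟨β, rfl⟩ : ∃ β, s = p * q / 2 + β := ⟨s - p * q / 2, by ring⟩
  obtain ⟨γ, rfl⟩ : ∃ γ, t = (1 + q ^ 2) / 2 + γ := ⟨t - (1 + q ^ 2) / 2, by ring⟩
  have htrace : (1 + q ^ 2) * α - 2 * p * q * β + (1 + p ^ 2) * γ = 0 := by
    linear_combination heq
  have hform := sq_tracefree_form_le hW hW0 hqW htrace
  set ℓ := 2 * (1 + q) * (p ^ 2 * α + 2 * p * q * β + q ^ 2 * γ) / (W * (W + 1))
    - 2 * (p * β + q * γ) with hℓ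
  have hsplit : W * (1 + q) - 2 * (((1 + p ^ 2) / 2 + α) * ((1 + q ^ 2) / 2 + γ)
        - (p * q / 2 + β) ^ 2) - 2 * (p * (p * q / 2 + β) + q * ((1 + q ^ 2) / 2 + γ))
      + 2 * (1 + q) * (p ^ 2 * ((1 + p ^ 2) / 2 + α) + 2 * p * q * (p * q / 2 + β)
        + q ^ 2 * ((1 + q ^ 2) / 2 + γ)) / (W * (W + 1)) =
      W ^ 2 / 2 + 2 * (β ^ 2 - α * γ) + ℓ := by
    have hgrad : p ^ 2 * ((1 + p ^ 2) / 2 + α) + 2 * p * q * (p * q / 2 + β)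
        + q ^ 2 * ((1 + q ^ 2) / 2 + γ) =
        W ^ 2 * (W ^ 2 - 1) / 2 + (p ^ 2 * α + 2 * p * q * β + q ^ 2 * γ) := by
      rw [hW]
      ring
    have hdet : ((1 + p ^ 2) / 2 + α) * ((1 + q ^ 2) / 2 + γ) - (p * q / 2 + β) ^ 2 =
        W ^ 2 / 4 + (α * γ - β ^ 2) := by
      linear_combination htrace / 2 - hW / 4
    have hy : p * (p * q / 2 + β) + q * ((1 + q ^ 2) / 2 + γ) =
        q * W ^ 2 / 2 + (p * β + q * γ) := by
      rw [hW]
      ring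
    rw [hgrad, hdet, hy, hℓ]
    field_simp
    ring
  rw [hsplit]
  nlinarith [sq_nonneg (ℓ + 4 * W ^ 2), sq_nonneg W, mul_pos hW0 hW0]

end HessianInequality

lemma IsTranslatorOn.neg_two_le_translatorOp_tilt {Ω : Set (ℝ × ℝ)} {u : ℝ × ℝ → ℝ} {z : ℝ × ℝ}
    (hu : IsTranslatorOn Ω u) (hz : Ω ∈ 𝓝 z) : -2 ≤ translatorOp u (tilt u) z := by
  have hW := areaElement_pos u z
  have hjet := neg_sq_le_of_translator_equation (areaElement_sq u z) hW
    (abs_pdy_lt_areaElement u z) (hu.2 z (mem_of_mem_nhds hz))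
  have htilt := hu.translatorOp_tilt hz
  rw [hessDet, hessGrad] at htilt
  rw [← htilt] at hjet
  by_contra! hlt
  nlinarith [mul_lt_mul_of_pos_left hlt (by positivity : 0 < (areaElement u z + 1) ^ 2)]

/-! ### Green's identity -/

/-- First component of the conormal field `(e^u / W) A ∇f`, where `A` is the coefficient matrix of
`translatorOp u`. -/
def conormal₁ (u f : ℝ × ℝ → ℝ) (z : ℝ × ℝ) : ℝ :=
  exp (u z) / areaElement u z * ((1 + pdy u z ^ 2) * pdx f z - pdx u z * pdy u z * pdy f z)

/-- Second component of the conormal field `(e^u / W) A ∇f`. -/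
def conormal₂ (u f : ℝ × ℝ → ℝ) (z : ℝ × ℝ) : ℝ :=
  exp (u z) / areaElement u z * ((1 + pdx u z ^ 2) * pdy f z - pdx u z * pdy u z * pdx f z)

section Green

variable {Ω : Set (ℝ × ℝ)} {u f g : ℝ × ℝ → ℝ} {z : ℝ × ℝ}

lemma contDiffAt_exp_div_areaElement (hu : ContDiffAt ℝ 2 u z) :
    ContDiffAt ℝ 1 (fun y => exp (u y) / areaElement u y) z :=
  (hu.of_le (by norm_num)).exp.div (contDiffAt_areaElement hu (by norm_num))
    (areaElement_pos u z).ne'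

lemma contDiffAt_conormal₁ (hu : ContDiffAt ℝ 2 u z) (hf : ContDiffAt ℝ 2 f z) :
    ContDiffAt ℝ 1 (conormal₁ u f) z := by
  have h : (1 : WithTop ℕ∞) + 1 ≤ 2 := by norm_num
  exact (contDiffAt_exp_div_areaElement hu).mul
    (((contDiffAt_const.add ((contDiffAt_pdy hu h).pow 2)).mul (contDiffAt_pdx hf h)).sub
      (((contDiffAt_pdx hu h).mul (contDiffAt_pdy hu h)).mul (contDiffAt_pdy hf h)))

lemma contDiffAt_conormal₂ (hu : ContDiffAt ℝ 2 u z) (hf : ContDiffAt ℝ 2 f z) :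
    ContDiffAt ℝ 1 (conormal₂ u f) z := by
  have h : (1 : WithTop ℕ∞) + 1 ≤ 2 := by norm_num
  exact (contDiffAt_exp_div_areaElement hu).mul
    (((contDiffAt_const.add ((contDiffAt_pdx hu h).pow 2)).mul (contDiffAt_pdy hf h)).sub
      (((contDiffAt_pdx hu h).mul (contDiffAt_pdy hu h)).mul (contDiffAt_pdx hf h)))

/-- The translator equation makes `e^u` the integrating factor for which `translatorOp u` has
divergence form. -/
lemma IsTranslatorOn.divergence_conormal (hu : IsTranslatorOn Ω u) (hz : Ω ∈ 𝓝 z)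
    (hf : ContDiffAt ℝ 2 f z) :
    divergence (conormal₁ u f) (conormal₂ u f) z =
      exp (u z) / areaElement u z * translatorOp u f z := by
  have hu2 : ContDiffAt ℝ 2 u z := (hu.contDiffAt hz).of_le (by norm_num)
  have hp := hasPartialsAt_pdx hu2
  have hq := hasPartialsAt_pdy hu2
  have hω := ((hasPartialsAt_of_contDiffAt hu2 (by norm_num)).comp (Real.hasDerivAt_exp _)).div
    (hasPartialsAt_areaElement hu2) (areaElement_pos u z).ne'
  have h₁ : HasPartialsAt (conormal₁ u f) _ _ z := hω.mul
    ((((HasPartialsAt.const 1 z).add hq.sq).mul (hasPartialsAt_pdx hf)).sub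
      ((hp.mul hq).mul (hasPartialsAt_pdy hf)))
  have h₂ : HasPartialsAt (conormal₂ u f) _ _ z := hω.mul
    ((((HasPartialsAt.const 1 z).add hp.sq).mul (hasPartialsAt_pdy hf)).sub
      ((hp.mul hq).mul (hasPartialsAt_pdx hf)))
  have hWpos := areaElement_pos u z
  have hW := areaElement_sq u z
  have heq : (1 + pdy u z ^ 2) * pdx (pdx u) z - 2 * pdx u z * pdy u z * pdy (pdx u) z
      + (1 + pdx u z ^ 2) * pdy (pdy u) z = areaElement u z ^ 2 :=
    hu.translatorOp_self (mem_of_mem_nhds hz)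
  rw [divergence, h₁.pdx_eq, h₂.pdy_eq, translatorOp]
  rw [← sub_eq_zero]
  trans exp (u z) * (pdx f z * pdx u z + pdy f z * pdy u z) *
    (areaElement u z ^ 2 - ((1 + pdy u z ^ 2) * pdx (pdx u) z
      - 2 * pdx u z * pdy u z * pdy (pdx u) z + (1 + pdx u z ^ 2) * pdy (pdy u) z)) /
      areaElement u z ^ 3
  · field_simp
    rw [hW]
    ring
  · rw [heq]; simp

lemma IsTranslatorOn.divergence_mul_conormal_sub (hu : IsTranslatorOn Ω u) (hz : Ω ∈ 𝓝 z)
    (hf : ContDiffAt ℝ 2 f z) (hg : ContDiffAt ℝ 2 g z) :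
    divergence (fun y => g y * conormal₁ u f y - f y * conormal₁ u g y)
        (fun y => g y * conormal₂ u f y - f y * conormal₂ u g y) z =
      exp (u z) / areaElement u z * (g z * translatorOp u f z - f z * translatorOp u g z) := by
  have hu2 : ContDiffAt ℝ 2 u z := (hu.contDiffAt hz).of_le (by norm_num)
  have h2 : (2 : WithTop ℕ∞) ≠ 0 := by norm_num
  have hf' := hf.differentiableAt h2
  have hg' := hg.differentiableAt h2
  have hf₁ := (contDiffAt_conormal₁ hu2 hf).differentiableAt one_ne_zero
  have hf₂ := (contDiffAt_conormal₂ hu2 hf).differentiableAt one_ne_zero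
  have hg₁ := (contDiffAt_conormal₁ hu2 hg).differentiableAt one_ne_zero
  have hg₂ := (contDiffAt_conormal₂ hu2 hg).differentiableAt one_ne_zero
  rw [divergence_sub (hg'.fun_mul hf₁) (hg'.fun_mul hf₂) (hf'.fun_mul hg₁) (hf'.fun_mul hg₂),
    divergence_smul hg' hf₁ hf₂, divergence_smul hf' hg₁ hg₂, hu.divergence_conormal hz hf,
    hu.divergence_conormal hz hg]
  simp only [conormal₁, conormal₂]
  ring

lemma IsTranslatorOn.setIntegral_le_of_le_green {a b c d : ℝ} {h K : ℝ × ℝ → ℝ}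
    {B : Set (ℝ × ℝ)} (hu : IsTranslatorOn Ω u) (hab : a ≤ b) (hcd : c ≤ d)
    (hΩ : ∀ z ∈ Icc a b ×ˢ Icc c d, Ω ∈ 𝓝 z)
    (hf : ∀ z ∈ Icc a b ×ˢ Icc c d, ContDiffAt ℝ 2 f z)
    (hg : ∀ z ∈ Icc a b ×ˢ Icc c d, ContDiffAt ℝ 2 g z)
    (hbd : ∀ x ∈ Icc a b, ∀ y ∈ Icc c d, (x = a ∨ x = b ∨ y = c ∨ y = d) →
      g (x, y) = 0 ∧ pdx g (x, y) = 0 ∧ pdy g (x, y) = 0)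
    (hB : MeasurableSet B) (hBR : B ⊆ Icc a b ×ˢ Icc c d) (hh : IntegrableOn h B)
    (hK : ContinuousOn K (Icc a b ×ˢ Icc c d))
    (hnonneg : ∀ z ∈ Icc a b ×ˢ Icc c d, 0 ≤ exp (u z) / areaElement u z *
      (g z * translatorOp u f z - f z * translatorOp u g z) + K z)
    (hle : ∀ z ∈ B, h z ≤ exp (u z) / areaElement u z *
      (g z * translatorOp u f z - f z * translatorOp u g z) + K z) :
    ∫ z in B, h z ≤ ∫ z in Icc a b ×ˢ Icc c d, K z := by
  have hu2 (z) (hz : z ∈ Icc a b ×ˢ Icc c d) : ContDiffAt ℝ 2 u z :=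
    (hu.contDiffAt (hΩ z hz)).of_le (by norm_num)
  have of_le {φ : ℝ × ℝ → ℝ} {z : ℝ × ℝ} (hφ : ContDiffAt ℝ 2 φ z) : ContDiffAt ℝ 1 φ z :=
    hφ.of_le (by norm_num)
  have hdiv (z) (hz : z ∈ Icc a b ×ˢ Icc c d) :=
    hu.divergence_mul_conormal_sub (hΩ z hz) (hf z hz) (hg z hz)
  have hzero (x) (hx : x ∈ Icc a b) (y) (hy : y ∈ Icc c d)
      (hxy : x = a ∨ x = b ∨ y = c ∨ y = d) :
      g (x, y) * conormal₁ u f (x, y) - f (x, y) * conormal₁ u g (x, y) = 0 ∧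
      g (x, y) * conormal₂ u f (x, y) - f (x, y) * conormal₂ u g (x, y) = 0 := by
    obtain ⟨hg₀, hgx, hgy⟩ := hbd x hx y hy hxy
    simp [conormal₁, conormal₂, hg₀, hgx, hgy]
  exact setIntegral_le_of_le_divergence_add hab hcd
    (fun z hz => ((of_le (hg z hz)).mul (contDiffAt_conormal₁ (hu2 z hz) (hf z hz))).sub
      ((of_le (hf z hz)).mul (contDiffAt_conormal₁ (hu2 z hz) (hg z hz))))
    (fun z hz => ((of_le (hg z hz)).mul (contDiffAt_conormal₂ (hu2 z hz) (hf z hz))).sub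
      ((of_le (hf z hz)).mul (contDiffAt_conormal₂ (hu2 z hz) (hg z hz))))
    (fun y hy => (hzero a (left_mem_Icc.2 hab) y hy (by simp)).1.ge)
    (fun y hy => (hzero b (right_mem_Icc.2 hab) y hy (by simp)).1.le)
    (fun x hx => (hzero x hx c (left_mem_Icc.2 hcd) (by simp)).2.ge)
    (fun x hx => (hzero x hx d (right_mem_Icc.2 hcd) (by simp)).2.le)
    hB hBR hh hK (fun z hz => by rw [hdiv z hz]; exact hnonneg z hz)
    (fun z hz => by rw [hdiv z (hBR hz)]; exact hle z hz)

end Green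

/-! ### Cutoff functions -/

lemma hasDerivAt_max_zero_sq (s : ℝ) : HasDerivAt (fun t : ℝ => max t 0 ^ 2) (2 * max s 0) s := by
  rcases lt_trichotomy s 0 with hs | rfl | hs
  · rw [max_eq_right hs.le, mul_zero]
    refine (hasDerivAt_const s (0 : ℝ)).congr_of_eventuallyEq ?_
    filter_upwards [Iio_mem_nhds hs] with t ht
    simp [max_eq_right (mem_Iio.1 ht).le]
  · simp only [hasDerivAt_iff_isLittleO, max_self, mul_zero, smul_zero, sub_zero]
    refine (Asymptotics.IsBigO.of_bound 1 (Eventually.of_forall fun t => ?_)).trans_isLittleO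
      (Asymptotics.isLittleO_pow_id (𝕜 := ℝ) one_lt_two)
    have : max t 0 ^ 2 ≤ t ^ 2 := sq_le_sq.2 (by
      rw [abs_of_nonneg (le_max_right t 0)]
      exact max_le (le_abs_self t) (abs_nonneg t))
    simpa using this
  · rw [max_eq_left hs.le]
    refine (by simpa using hasDerivAt_pow 2 s : HasDerivAt (fun t : ℝ => t ^ 2) (2 * s) s)
      |>.congr_of_eventuallyEq ?_
    filter_upwards [Ioi_mem_nhds hs] with t ht
    rw [max_eq_left (mem_Ioi.1 ht).le]

lemma contDiff_max_zero_sq : ContDiff ℝ 1 fun s : ℝ => max s 0 ^ 2 := by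
  rw [contDiff_one_iff_deriv, funext fun s => (hasDerivAt_max_zero_sq s).deriv]
  exact ⟨fun s => (hasDerivAt_max_zero_sq s).differentiableAt, by fun_prop⟩

/-- A `C¹` nondecreasing function with values in `[0, 1]` that vanishes on `(-∞, 0]`. -/
def ramp (s : ℝ) : ℝ := max s 0 ^ 2 / (1 + max s 0 ^ 2)

/-- The derivative of `ramp`. -/
def rampDeriv (s : ℝ) : ℝ := 2 * max s 0 / (1 + max s 0 ^ 2) ^ 2

lemma hasDerivAt_ramp (s : ℝ) : HasDerivAt ramp (rampDeriv s) s := by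
  have h := hasDerivAt_max_zero_sq s
  refine (h.fun_div (h.const_add 1) (by positivity)).congr_deriv ?_
  rw [rampDeriv]
  ring

lemma contDiff_ramp : ContDiff ℝ 1 ramp :=
  contDiff_max_zero_sq.div (contDiff_const.add contDiff_max_zero_sq) fun s => by positivity

lemma continuous_rampDeriv : Continuous rampDeriv :=
  Continuous.div (by fun_prop) (by fun_prop) fun s => by positivity

lemma ramp_nonneg (s : ℝ) : 0 ≤ ramp s := by rw [ramp]; positivity

lemma ramp_le_one (s : ℝ) : ramp s ≤ 1 := by
  rw [ramp, div_le_one (by positivity)]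
  linarith

lemma rampDeriv_nonneg (s : ℝ) : 0 ≤ rampDeriv s := by rw [rampDeriv]; positivity

lemma rampDeriv_le_one (s : ℝ) : rampDeriv s ≤ 1 := by
  rw [rampDeriv, div_le_one (by positivity)]
  nlinarith [sq_nonneg (max s 0 - 1), sq_nonneg (max s 0 ^ 2)]

lemma ramp_of_nonpos {s : ℝ} (hs : s ≤ 0) : ramp s = 0 := by simp [ramp, max_eq_right hs]

lemma half_le_ramp {s : ℝ} (hs : 1 ≤ s) : 1 / 2 ≤ ramp s := by
  rw [ramp, max_eq_left (by linarith), div_le_div_iff₀ (by norm_num) (by positivity)]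
  nlinarith

lemma one_div_fifty_le_rampDeriv {s : ℝ} (hs : 1 ≤ s) (hs' : s ≤ 3) : 1 / 50 ≤ rampDeriv s := by
  rw [rampDeriv, max_eq_left (by linarith), div_le_div_iff₀ (by norm_num) (by positivity)]
  have : (1 + s ^ 2) ^ 2 ≤ (1 + 3 ^ 2) ^ 2 := by gcongr
  linarith

/-- A `C¹` bump function on the line, supported in `[x₀ - L, x₀ + L]`. -/
def bump (x₀ L x : ℝ) : ℝ := max (1 - ((x - x₀) / L) ^ 2) 0 ^ 2

/-- The derivative of `bump x₀ L`. -/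
def bumpDeriv (x₀ L x : ℝ) : ℝ := -4 * (x - x₀) / L ^ 2 * max (1 - ((x - x₀) / L) ^ 2) 0

section Bump

variable {x₀ L x : ℝ}

lemma hasDerivAt_bump (x₀ L x : ℝ) : HasDerivAt (bump x₀ L) (bumpDeriv x₀ L x) x := by
  have hinner : HasDerivAt (fun t : ℝ => 1 - ((t - x₀) / L) ^ 2) (-(2 * (x - x₀) / L ^ 2)) x :=
    (((((hasDerivAt_id x).sub_const x₀).div_const L).fun_pow 2).const_sub 1).congr_deriv
      (by simp only [id, Nat.cast_ofNat]; ring)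
  refine ((hasDerivAt_max_zero_sq _).comp x hinner).congr_deriv ?_
  rw [bumpDeriv]
  ring

lemma contDiff_bump (x₀ L : ℝ) : ContDiff ℝ 1 (bump x₀ L) :=
  contDiff_max_zero_sq.comp
    (contDiff_const.sub (((contDiff_id.sub contDiff_const).div_const L).pow 2))

lemma bump_nonneg (x₀ L x : ℝ) : 0 ≤ bump x₀ L x := by rw [bump]; positivity

lemma bump_le_one (x₀ L x : ℝ) : bump x₀ L x ≤ 1 :=
  pow_le_one₀ (le_max_right _ _)
    (max_le (by linarith [sq_nonneg ((x - x₀) / L)]) zero_le_one)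

lemma bump_sub_self (hL : 0 < L) : bump x₀ L (x₀ - L) = 0 := by
  simp [bump, neg_div, div_self hL.ne']

lemma bump_add_self (hL : 0 < L) : bump x₀ L (x₀ + L) = 0 := by
  simp [bump, div_self hL.ne']

lemma bumpDeriv_sq_le (hL : 0 < L) (hx : |x - x₀| ≤ L) :
    bumpDeriv x₀ L x ^ 2 ≤ 16 / L ^ 2 * bump x₀ L x := by
  have hsq : ((x - x₀) / L) ^ 2 ≤ 1 := by
    rwa [sq_le_one_iff_abs_le_one, abs_div, abs_of_pos hL, div_le_one hL]
  have heq : bumpDeriv x₀ L x ^ 2 = 16 / L ^ 2 * bump x₀ L x * ((x - x₀) / L) ^ 2 := by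
    rw [bumpDeriv, bump]
    ring
  rw [heq]
  exact mul_le_of_le_one_right (mul_nonneg (by positivity) (bump_nonneg _ _ _)) hsq

lemma nine_div_sixteen_le_bump (hL : 0 < L) (hx : |x - x₀| ≤ L / 2) : 9 / 16 ≤ bump x₀ L x := by
  have habs : |(x - x₀) / L| ≤ 1 / 2 := by
    rw [abs_div, abs_of_pos hL, div_le_iff₀ hL]
    linarith
  have hsq : ((x - x₀) / L) ^ 2 ≤ (1 / 2) ^ 2 := sq_le_sq' (abs_le.1 habs).1 (abs_le.1 habs).2
  calc (9 / 16 : ℝ) = (3 / 4) ^ 2 := by norm_num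
    _ ≤ max (1 - ((x - x₀) / L) ^ 2) 0 ^ 2 := by
      gcongr
      exact le_max_of_le_left (by linarith)

end Bump

/-! ### Flux estimates -/

/-- The defect `1 - u_y / W`, half the squared distance of the unit normal to `(0, -1, 0)`. -/
def normalDefect (u : ℝ × ℝ → ℝ) (z : ℝ × ℝ) : ℝ := 1 - pdy u z / areaElement u z

/-- First component of the field `∇u / W - (0, s)`. -/
def gradFlux₁ (u : ℝ × ℝ → ℝ) (z : ℝ × ℝ) : ℝ := pdx u z / areaElement u z

/-- Second component of the field `∇u / W - (0, s)`. -/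
def gradFlux₂ (s : ℝ) (u : ℝ × ℝ → ℝ) (z : ℝ × ℝ) : ℝ := pdy u z / areaElement u z - s

/-- A cutoff in `x`, of width `L` about `x₀`, and in `u`, at the height `c` with transition of
width `r`. -/
def cutoff (u : ℝ × ℝ → ℝ) (x₀ L c r : ℝ) (z : ℝ × ℝ) : ℝ :=
  bump x₀ L z.1 * ramp ((u z - c) / r + 2)

/-- The derivative of `cutoff u x₀ L c r` with respect to the value of `u`. -/
def cutoffSlope (u : ℝ × ℝ → ℝ) (x₀ L c r : ℝ) (z : ℝ × ℝ) : ℝ :=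
  bump x₀ L z.1 * (rampDeriv ((u z - c) / r + 2) / r)

section NormalDefect

variable (u : ℝ × ℝ → ℝ) (z : ℝ × ℝ)

lemma normalDefect_nonneg : 0 ≤ normalDefect u z := by
  rw [normalDefect, sub_nonneg, div_le_one (areaElement_pos u z)]
  exact (abs_lt.1 (abs_pdy_lt_areaElement u z)).2.le

lemma gradFlux₁_sq_add_normalDefect_sq_add :
    gradFlux₁ u z ^ 2 + normalDefect u z ^ 2 + (1 / areaElement u z) ^ 2 =
      2 * normalDefect u z := by
  have hW := areaElement_pos u z
  rw [gradFlux₁, normalDefect]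
  field_simp
  linear_combination -areaElement_sq u z

lemma gradFlux₁_sq_le : gradFlux₁ u z ^ 2 ≤ 2 * normalDefect u z := by
  linarith [gradFlux₁_sq_add_normalDefect_sq_add u z, sq_nonneg (normalDefect u z),
    sq_nonneg (1 / areaElement u z)]

lemma one_div_areaElement_sq_le : (1 / areaElement u z) ^ 2 ≤ 2 * normalDefect u z := by
  linarith [gradFlux₁_sq_add_normalDefect_sq_add u z, sq_nonneg (normalDefect u z),
    sq_nonneg (gradFlux₁ u z)]

lemma pdx_mul_gradFlux₁_add_pdy_mul_gradFlux₂ (s : ℝ) :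
    pdx u z * gradFlux₁ u z + pdy u z * gradFlux₂ s u z =
      areaElement u z - s * pdy u z - 1 / areaElement u z := by
  have hW := areaElement_pos u z
  rw [gradFlux₁, gradFlux₂]
  field_simp
  linear_combination -areaElement_sq u z

end NormalDefect

section Cutoff

variable {Ω : Set (ℝ × ℝ)} {u : ℝ × ℝ → ℝ} {z : ℝ × ℝ} {x₀ L c r s : ℝ}

lemma contDiffAt_normalDefect {m n : WithTop ℕ∞} (hu : ContDiffAt ℝ n u z) (hmn : m + 1 ≤ n) :
    ContDiffAt ℝ m (normalDefect u) z :=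
  contDiffAt_const.sub
    ((contDiffAt_pdy hu hmn).div (contDiffAt_areaElement hu hmn) (areaElement_pos u z).ne')

lemma contDiffAt_gradFlux₁ {m n : WithTop ℕ∞} (hu : ContDiffAt ℝ n u z) (hmn : m + 1 ≤ n) :
    ContDiffAt ℝ m (gradFlux₁ u) z :=
  (contDiffAt_pdx hu hmn).div (contDiffAt_areaElement hu hmn) (areaElement_pos u z).ne'

lemma contDiffAt_gradFlux₂ {m n : WithTop ℕ∞} (hu : ContDiffAt ℝ n u z) (hmn : m + 1 ≤ n) :
    ContDiffAt ℝ m (gradFlux₂ s u) z :=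
  ((contDiffAt_pdy hu hmn).div (contDiffAt_areaElement hu hmn) (areaElement_pos u z).ne').sub
    contDiffAt_const

lemma IsTranslatorOn.divergence_gradFlux (hu : IsTranslatorOn Ω u) (hz : Ω ∈ 𝓝 z) :
    divergence (gradFlux₁ u) (gradFlux₂ s u) z = 1 / areaElement u z := by
  have hu2 : ContDiffAt ℝ 2 u z := (hu.contDiffAt hz).of_le (by norm_num)
  have hW0 := (areaElement_pos u z).ne'
  have hW := areaElement_sq u z
  have h₁ : HasPartialsAt (gradFlux₁ u) _ _ z :=
    (hasPartialsAt_pdx hu2).div (hasPartialsAt_areaElement hu2) hW0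
  have h₂ : HasPartialsAt (gradFlux₂ s u) _ _ z :=
    ((hasPartialsAt_pdy hu2).div (hasPartialsAt_areaElement hu2) hW0).sub
      (HasPartialsAt.const s z)
  have heq := hu.translatorOp_self (mem_of_mem_nhds hz)
  rw [translatorOp] at heq
  rw [divergence, h₁.pdx_eq, h₂.pdy_eq]
  field_simp
  linear_combination heq + (pdx (pdx u) z + pdy (pdy u) z) * hW

lemma cutoff_nonneg (u : ℝ × ℝ → ℝ) (x₀ L c r : ℝ) (z : ℝ × ℝ) : 0 ≤ cutoff u x₀ L c r z :=
  mul_nonneg (bump_nonneg _ _ _) (ramp_nonneg _)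

lemma cutoff_le_one (u : ℝ × ℝ → ℝ) (x₀ L c r : ℝ) (z : ℝ × ℝ) : cutoff u x₀ L c r z ≤ 1 :=
  mul_le_one₀ (bump_le_one _ _ _) (ramp_nonneg _) (ramp_le_one _)

lemma cutoff_left (hL : 0 < L) (y : ℝ) : cutoff u x₀ L c r (x₀ - L, y) = 0 := by
  simp [cutoff, bump_sub_self hL]

lemma cutoff_right (hL : 0 < L) (y : ℝ) : cutoff u x₀ L c r (x₀ + L, y) = 0 := by
  simp [cutoff, bump_add_self hL]

lemma cutoff_of_le (hr : 0 < r) (hz : u z ≤ c - 2 * r) : cutoff u x₀ L c r z = 0 := by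
  have : (u z - c) / r ≤ -2 := by
    rw [div_le_iff₀ hr]
    linarith
  rw [cutoff, ramp_of_nonpos (by linarith), mul_zero]

lemma nine_div_thirtyTwo_le_cutoff (hL : 0 < L) (hr : 0 < r) (hx : |z.1 - x₀| ≤ L / 2)
    (hz : c - r ≤ u z) : 9 / 32 ≤ cutoff u x₀ L c r z := by
  have hs : -1 ≤ (u z - c) / r := by
    rw [le_div_iff₀ hr]
    linarith
  calc (9 / 32 : ℝ) = 9 / 16 * (1 / 2) := by norm_num
    _ ≤ cutoff u x₀ L c r z := mul_le_mul (nine_div_sixteen_le_bump hL hx)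
      (half_le_ramp (by linarith)) (by norm_num) (bump_nonneg _ _ _)

lemma cutoffSlope_nonneg (hr : 0 ≤ r) : 0 ≤ cutoffSlope u x₀ L c r z :=
  mul_nonneg (bump_nonneg _ _ _) (div_nonneg (rampDeriv_nonneg _) hr)

lemma cutoffSlope_le (hr : 0 ≤ r) : cutoffSlope u x₀ L c r z ≤ 1 / r :=
  (mul_le_of_le_one_left (div_nonneg (rampDeriv_nonneg _) hr) (bump_le_one _ _ _)).trans
    (div_le_div_of_nonneg_right (rampDeriv_le_one _) hr)

lemma contDiffAt_cutoff (hu : ContDiffAt ℝ 1 u z) : ContDiffAt ℝ 1 (cutoff u x₀ L c r) z :=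
  ((contDiff_bump x₀ L).contDiffAt.comp z contDiffAt_fst).mul
    (contDiff_ramp.contDiffAt.comp z
      (((hu.sub contDiffAt_const).div_const r).add contDiffAt_const))

lemma hasPartialsAt_cutoff (hu : DifferentiableAt ℝ u z) :
    HasPartialsAt (cutoff u x₀ L c r)
      (cutoffSlope u x₀ L c r z * pdx u z
        + ramp ((u z - c) / r + 2) * bumpDeriv x₀ L z.1)
      (cutoffSlope u x₀ L c r z * pdy u z) z := by
  have hramp : HasDerivAt (fun t => ramp ((t - c) / r + 2))
      (rampDeriv ((u z - c) / r + 2) / r) (u z) := by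
    refine ((hasDerivAt_ramp _).comp (u z)
      ((((hasDerivAt_id (u z)).sub_const c).div_const r).add_const 2)).congr_deriv ?_
    simp only [id, mul_one_div]
  refine (((HasPartialsAt.fst z).comp (hasDerivAt_bump x₀ L z.1)).mul
    ((hasPartialsAt_of_differentiableAt hu).comp hramp)).congr_partials ?_ ?_ <;>
  · rw [cutoffSlope]
    ring

lemma IsTranslatorOn.divergence_cutoff_mul_gradFlux (hu : IsTranslatorOn Ω u) (hz : Ω ∈ 𝓝 z) :
    divergence (fun y => cutoff u x₀ L c r y * gradFlux₁ u y)
        (fun y => cutoff u x₀ L c r y * gradFlux₂ s u y) z =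
      cutoff u x₀ L c r z / areaElement u z
        + ramp ((u z - c) / r + 2) * (bumpDeriv x₀ L z.1 * gradFlux₁ u z)
        + cutoffSlope u x₀ L c r z * (areaElement u z - s * pdy u z - 1 / areaElement u z) := by
  have hu3 := hu.contDiffAt hz
  have h13 : (1 : WithTop ℕ∞) + 1 ≤ 3 := by norm_num
  have hcut := hasPartialsAt_cutoff (x₀ := x₀) (L := L) (c := c) (r := r)
    (hu3.differentiableAt (by norm_num))
  rw [divergence_smul hcut.differentiableAt
    ((contDiffAt_gradFlux₁ hu3 h13).differentiableAt one_ne_zero)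
    ((contDiffAt_gradFlux₂ hu3 h13).differentiableAt one_ne_zero),
    hu.divergence_gradFlux hz, hcut.pdx_eq, hcut.pdy_eq,
    ← pdx_mul_gradFlux₁_add_pdy_mul_gradFlux₂ u z s]
  ring

end Cutoff

section FluxEstimates

variable {Ω : Set (ℝ × ℝ)} {u : ℝ × ℝ → ℝ} {x₀ L c r w y₀ ya yb : ℝ} {z : ℝ × ℝ}

lemma abs_bumpDeriv_mul_gradFlux₁_le (hL : 0 < L) (hx : |z.1 - x₀| ≤ L) {τ : ℝ} (hτ : |τ| ≤ w) :
    |τ * (bumpDeriv x₀ L z.1 * gradFlux₁ u z)| ≤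
      bump x₀ L z.1 * normalDefect u z / 2 + 16 * w ^ 2 / L ^ 2 := by
  have hη := bump_nonneg x₀ L z.1
  have hd := normalDefect_nonneg u z
  set A := bump x₀ L z.1 * normalDefect u z / 2
  set B := 16 * w ^ 2 / L ^ 2
  refine abs_le_of_sq_le_sq ?_ (by positivity)
  calc (τ * (bumpDeriv x₀ L z.1 * gradFlux₁ u z)) ^ 2
      = τ ^ 2 * (bumpDeriv x₀ L z.1 ^ 2 * gradFlux₁ u z ^ 2) := by ring
    _ ≤ w ^ 2 * (16 / L ^ 2 * bump x₀ L z.1 * (2 * normalDefect u z)) := by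
      have hτ' : τ ^ 2 ≤ w ^ 2 := sq_le_sq' (abs_le.1 hτ).1 (abs_le.1 hτ).2
      have hb := bumpDeriv_sq_le hL hx
      have hP := gradFlux₁_sq_le u z
      gcongr
    _ = 4 * A * B := by ring
    _ ≤ (A + B) ^ 2 := four_mul_le_sq_add A B

lemma IsTranslatorOn.divergence_sub_snd_mul_cutoff_mul_gradFlux (hu : IsTranslatorOn Ω u)
    (hz : Ω ∈ 𝓝 z) :
    divergence (fun y => (yb - y.2) * (cutoff u x₀ L c r y * gradFlux₁ u y))
        (fun y => (yb - y.2) * (cutoff u x₀ L c r y * gradFlux₂ 1 u y)) z =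
      (yb - z.2) * (cutoff u x₀ L c r z / areaElement u z
        + ramp ((u z - c) / r + 2) * (bumpDeriv x₀ L z.1 * gradFlux₁ u z)
        + cutoffSlope u x₀ L c r z * (areaElement u z - pdy u z - 1 / areaElement u z))
        + cutoff u x₀ L c r z * normalDefect u z := by
  have hu3 := hu.contDiffAt hz
  have h13 : (1 : WithTop ℕ∞) + 1 ≤ 3 := by norm_num
  have hcut := contDiffAt_cutoff (x₀ := x₀) (L := L) (c := c) (r := r)
    (hu3.of_le (by norm_num))
  have hτ := (HasPartialsAt.const yb z).sub (HasPartialsAt.snd z)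
  rw [divergence_smul hτ.differentiableAt
    ((hcut.mul (contDiffAt_gradFlux₁ hu3 h13)).differentiableAt one_ne_zero)
    ((hcut.mul (contDiffAt_gradFlux₂ hu3 h13)).differentiableAt one_ne_zero),
    hu.divergence_cutoff_mul_gradFlux hz, hτ.pdx_eq, hτ.pdy_eq, normalDefect, gradFlux₂]
  ring

/-- The cross term is absorbed by the arithmetic-geometric mean inequality. -/
lemma IsTranslatorOn.half_cutoff_mul_normalDefect_le (hu : IsTranslatorOn Ω u) (hz : Ω ∈ 𝓝 z)
    (hL : 0 < L) (hr : 0 < r) (hrL : L ^ 2 ≤ r * w) (hx : |z.1 - x₀| ≤ L) (hy : z.2 ≤ yb)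
    (hyw : yb - z.2 ≤ w) :
    cutoff u x₀ L c r z * normalDefect u z / 2 ≤
      divergence (fun y => (yb - y.2) * (cutoff u x₀ L c r y * gradFlux₁ u y))
        (fun y => (yb - y.2) * (cutoff u x₀ L c r y * gradFlux₂ 1 u y)) z
        + 17 * w ^ 2 / L ^ 2 := by
  have hτ : 0 ≤ yb - z.2 := sub_nonneg.2 hy
  have hslope := cutoffSlope_nonneg (u := u) (x₀ := x₀) (L := L) (c := c) (z := z) hr.le
  have hcross : -(cutoff u x₀ L c r z * normalDefect u z / 2 + 16 * w ^ 2 / L ^ 2) ≤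
      ramp ((u z - c) / r + 2) * ((yb - z.2) * (bumpDeriv x₀ L z.1 * gradFlux₁ u z)) := by
    have habs := (abs_le.1 (abs_bumpDeriv_mul_gradFlux₁_le (u := u) hL hx
      ((abs_of_nonneg hτ).trans_le hyw))).1
    have hζ : ramp ((u z - c) / r + 2) * (16 * w ^ 2 / L ^ 2) ≤ 16 * w ^ 2 / L ^ 2 :=
      mul_le_of_le_one_left (by positivity) (ramp_le_one _)
    have := mul_le_mul_of_nonneg_left habs (ramp_nonneg ((u z - c) / r + 2))
    rw [cutoff]
    linarith
  have hsource : 0 ≤ (yb - z.2) * (cutoff u x₀ L c r z / areaElement u z) :=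
    mul_nonneg hτ (div_nonneg (cutoff_nonneg _ _ _ _ _ _) (areaElement_pos u z).le)
  have hgain : 0 ≤ (yb - z.2) * (cutoffSlope u x₀ L c r z * (areaElement u z - pdy u z)) :=
    mul_nonneg hτ (mul_nonneg hslope
      (sub_nonneg.2 (abs_lt.1 (abs_pdy_lt_areaElement u z)).2.le))
  have hloss : (yb - z.2) * (cutoffSlope u x₀ L c r z * (1 / areaElement u z)) ≤
      w ^ 2 / L ^ 2 := by
    have hw : 0 ≤ w := hτ.trans hyw
    have hW := areaElement_pos u z
    calc _ ≤ w * (1 / r * (1 / 1)) := by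
          gcongr
          exacts [cutoffSlope_le hr.le, one_le_areaElement u z]
      _ = w / r := by ring
      _ ≤ w ^ 2 / L ^ 2 := by
        rw [div_le_div_iff₀ hr (by positivity)]
        nlinarith
  rw [hu.divergence_sub_snd_mul_cutoff_mul_gradFlux hz,
    show 17 * w ^ 2 / L ^ 2 = 16 * w ^ 2 / L ^ 2 + w ^ 2 / L ^ 2 by ring]
  linarith

lemma volume_real_Icc_prod_Icc {a b c d : ℝ} (hab : a ≤ b) (hcd : c ≤ d) :
    (volume : Measure (ℝ × ℝ)).real (Icc a b ×ˢ Icc c d) = (b - a) * (d - c) := by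
  rw [Measure.volume_eq_prod, measureReal_prod_prod, Real.volume_real_Icc_of_le hab,
    Real.volume_real_Icc_of_le hcd]

lemma integrableOn_Icc_prod_Icc {f : ℝ × ℝ → ℝ} {a b c d : ℝ}
    (hf : ContinuousOn f (Icc a b ×ˢ Icc c d)) : IntegrableOn f (Icc a b ×ˢ Icc c d) :=
  hf.integrableOn_compact (isCompact_Icc.prod isCompact_Icc)

lemma abs_fst_sub_le {z : ℝ × ℝ} {t : Set ℝ} (hz : z ∈ Icc (x₀ - L) (x₀ + L) ×ˢ t) :
    |z.1 - x₀| ≤ L :=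
  abs_le.2 ⟨by linarith [hz.1.1], by linarith [hz.1.2]⟩

lemma IsTranslatorOn.continuousOn_normalDefect {s : Set (ℝ × ℝ)} (hu : IsTranslatorOn Ω u)
    (hΩ : ∀ z ∈ s, Ω ∈ 𝓝 z) : ContinuousOn (normalDefect u) s := fun z hz =>
  (contDiffAt_normalDefect (m := 0) (hu.contDiffAt (hΩ z hz))
    (by norm_num)).continuousAt.continuousWithinAt

/-- The field `∇u / W - (0, 1)`, of positive divergence, is tested with a cutoff times `yb - y`: the
slope in `y` brings out the vertical component, which is minus the defect. -/
lemma IsTranslatorOn.integral_normalDefect_le (hu : IsTranslatorOn Ω u) (hL : 0 < L) (hr : 0 < r)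
    (hrL : L ^ 2 ≤ r * w) (hya : y₀ ≤ ya) (hab : ya ≤ yb) (hyw : yb - y₀ ≤ w)
    (hΩ : ∀ z ∈ Icc (x₀ - L) (x₀ + L) ×ˢ Icc y₀ yb, Ω ∈ 𝓝 z)
    (hbot : ∀ x ∈ Icc (x₀ - L) (x₀ + L), u (x, y₀) ≤ c - 2 * r)
    (hlow : ∀ z ∈ Icc (x₀ - L / 2) (x₀ + L / 2) ×ˢ Icc ya yb, c - r ≤ u z) :
    ∫ z in Icc (x₀ - L / 2) (x₀ + L / 2) ×ˢ Icc ya yb, normalDefect u z ≤ 242 * w ^ 3 / L := by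
  have hBR : Icc (x₀ - L / 2) (x₀ + L / 2) ×ˢ Icc ya yb ⊆
      Icc (x₀ - L) (x₀ + L) ×ˢ Icc y₀ yb :=
    prod_mono (Icc_subset_Icc (by linarith) (by linarith)) (Icc_subset_Icc hya le_rfl)
  have hu3 (z) (hz : z ∈ Icc (x₀ - L) (x₀ + L) ×ˢ Icc y₀ yb) := hu.contDiffAt (hΩ z hz)
  have h13 : (1 : WithTop ℕ∞) + 1 ≤ 3 := by norm_num
  have hτcut (z) (hz : z ∈ Icc (x₀ - L) (x₀ + L) ×ˢ Icc y₀ yb) :=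
    contDiffAt_cutoff (x₀ := x₀) (L := L) (c := c) (r := r) ((hu3 z hz).of_le (by norm_num))
  have hτ (z) : ContDiffAt ℝ 1 (fun y : ℝ × ℝ => yb - y.2) z :=
    contDiffAt_const.sub contDiffAt_snd
  have hpointwise (z) (hz : z ∈ Icc (x₀ - L) (x₀ + L) ×ˢ Icc y₀ yb) :=
    hu.half_cutoff_mul_normalDefect_le (c := c) (hΩ z hz) hL hr hrL (abs_fst_sub_le hz) hz.2.2
      (by linarith [hz.2.1] : yb - z.2 ≤ w)
  have hmain := setIntegral_le_of_le_divergence_add (g := fun z => 9 / 64 * normalDefect u z)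
    (by linarith : x₀ - L ≤ x₀ + L) (hya.trans hab)
    (fun z hz => (hτ z).mul ((hτcut z hz).mul (contDiffAt_gradFlux₁ (hu3 z hz) h13)))
    (fun z hz => (hτ z).mul ((hτcut z hz).mul (contDiffAt_gradFlux₂ (hu3 z hz) h13)))
    (fun y _ => by simp [cutoff_left hL]) (fun y _ => by simp [cutoff_right hL])
    (fun x hx => by simp [cutoff_of_le hr (hbot x hx)]) (fun x _ => by simp)
    (measurableSet_Icc.prod measurableSet_Icc) hBR
    ((integrableOn_Icc_prod_Icc
      (hu.continuousOn_normalDefect fun z hz => hΩ z (hBR hz))).const_mul _)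
    continuousOn_const
    (fun z hz => (div_nonneg (mul_nonneg (cutoff_nonneg _ _ _ _ _ _)
      (normalDefect_nonneg u z)) zero_le_two).trans (hpointwise z hz))
    (fun z hz => le_trans (by
      have := mul_le_mul_of_nonneg_right (nine_div_thirtyTwo_le_cutoff hL hr
        (abs_fst_sub_le hz) (hlow z hz)) (normalDefect_nonneg u z)
      linarith) (hpointwise z (hBR hz)))
  rw [integral_const_mul, setIntegral_const, volume_real_Icc_prod_Icc (by linarith)
    (hya.trans hab), smul_eq_mul] at hmain
  have hw : 0 ≤ w := by linarith
  have hK : (x₀ + L - (x₀ - L)) * (yb - y₀) * (17 * w ^ 2 / L ^ 2) ≤ 34 * (w ^ 3 / L) := by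
    calc _ ≤ (x₀ + L - (x₀ - L)) * w * (17 * w ^ 2 / L ^ 2) := by gcongr; linarith
      _ = 34 * (w ^ 3 / L) := by field_simp; ring
  have : 0 ≤ w ^ 3 / L := by positivity
  rw [mul_div_assoc]
  linarith

/-- The area of the graph in the slab `c - r ≤ u ≤ c + r`, in which the defect `W - u_y` carries
full weight and `u_y` only weight `r ^ 2`. -/
def slabDensity (u : ℝ × ℝ → ℝ) (c r : ℝ) (z : ℝ × ℝ) : ℝ :=
  rampDeriv ((u z - c) / r + 2) * (areaElement u z - (1 - r ^ 2) * pdy u z)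

lemma slabDensity_nonneg (hr : 0 ≤ r) (hr1 : r ≤ 1) : 0 ≤ slabDensity u c r z := by
  have hr2 : 0 ≤ 1 - r ^ 2 := sub_nonneg.2 (pow_le_one₀ hr hr1)
  have hq : (1 - r ^ 2) * pdy u z ≤ areaElement u z := by
    calc (1 - r ^ 2) * pdy u z ≤ (1 - r ^ 2) * areaElement u z :=
          mul_le_mul_of_nonneg_left (abs_lt.1 (abs_pdy_lt_areaElement u z)).2.le hr2
      _ ≤ areaElement u z :=
          mul_le_of_le_one_left (areaElement_pos u z).le (sub_le_self 1 (sq_nonneg r))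
  exact mul_nonneg (rampDeriv_nonneg _) (sub_nonneg.2 hq)

lemma IsTranslatorOn.continuousOn_slabDensity {s : Set (ℝ × ℝ)} (hu : IsTranslatorOn Ω u)
    (hΩ : ∀ z ∈ s, Ω ∈ 𝓝 z) : ContinuousOn (slabDensity u c r) s := fun z hz => by
  have hu3 := hu.contDiffAt (hΩ z hz)
  have h03 : (0 : WithTop ℕ∞) + 1 ≤ 3 := by norm_num
  have hramp : ContinuousAt (fun y => rampDeriv ((u y - c) / r + 2)) z :=
    continuous_rampDeriv.continuousAt.comp
      (((hu3.continuousAt.sub continuousAt_const).div_const r).add continuousAt_const)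
  exact (hramp.mul ((contDiffAt_areaElement hu3 h03).continuousAt.sub
    (continuousAt_const.mul (contDiffAt_pdy hu3 h03).continuousAt))).continuousWithinAt

lemma abs_le_add_div_of_sq_le {t d κ : ℝ} (hκ : 0 < κ) (ht : t ^ 2 ≤ 2 * d) :
    |t| ≤ κ + d / κ := by
  have hd : 0 ≤ d := by linarith [sq_nonneg t]
  refine abs_le_of_sq_le_sq (ht.trans ?_) (by positivity)
  calc 2 * d = 2 * κ * (d / κ) := by field_simp
    _ ≤ (κ + d / κ) ^ 2 := by nlinarith [sq_nonneg κ, sq_nonneg (d / κ)]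

lemma abs_bumpDeriv_le (hr : 0 < r) (hx : |z.1 - x₀| ≤ 2 * r) :
    |bumpDeriv x₀ (2 * r) z.1| ≤ 2 / r := by
  refine abs_le_of_sq_le_sq ((bumpDeriv_sq_le (by positivity) hx).trans ?_) (by positivity)
  calc 16 / (2 * r) ^ 2 * bump x₀ (2 * r) z.1 ≤ 16 / (2 * r) ^ 2 * 1 := by
        gcongr
        exact bump_le_one _ _ _
    _ = (2 / r) ^ 2 := by ring

lemma nine_div_le_bump_div (hr : 0 < r) (hx : |z.1 - x₀| ≤ r) :
    9 / (16 * r) ≤ bump x₀ (2 * r) z.1 / r := by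
  rw [← div_div]
  exact div_le_div_of_nonneg_right
    (nine_div_sixteen_le_bump (by positivity) (hx.trans_eq (by ring))) hr.le

lemma cutoff_mul_gradFlux₂_le (z : ℝ × ℝ) :
    cutoff u x₀ L c r z * gradFlux₂ (1 - r ^ 2) u z ≤ r ^ 2 := by
  have hflux : gradFlux₂ (1 - r ^ 2) u z ≤ r ^ 2 := by
    have := normalDefect_nonneg u z
    rw [normalDefect] at this
    rw [gradFlux₂]
    linarith
  calc _ ≤ cutoff u x₀ L c r z * r ^ 2 :=
        mul_le_mul_of_nonneg_left hflux (cutoff_nonneg _ _ _ _ _ _)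
    _ ≤ r ^ 2 := mul_le_of_le_one_left (sq_nonneg r) (cutoff_le_one _ _ _ _ _ _)

lemma IsTranslatorOn.divergence_slab (hu : IsTranslatorOn Ω u) (hz : Ω ∈ 𝓝 z) :
    divergence (fun y => cutoff u x₀ (2 * r) c r y * gradFlux₁ u y)
        (fun y => cutoff u x₀ (2 * r) c r y * gradFlux₂ (1 - r ^ 2) u y
          - r ^ 2 / (yb - y₀) * (y.2 - y₀)) z =
      bump x₀ (2 * r) z.1 / r * slabDensity u c r z
        + cutoff u x₀ (2 * r) c r z / areaElement u z
        + ramp ((u z - c) / r + 2) * (bumpDeriv x₀ (2 * r) z.1 * gradFlux₁ u z)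
        - cutoffSlope u x₀ (2 * r) c r z * (1 / areaElement u z) - r ^ 2 / (yb - y₀) := by
  have hu3 := hu.contDiffAt hz
  have h13 : (1 : WithTop ℕ∞) + 1 ≤ 3 := by norm_num
  have hcut := contDiffAt_cutoff (x₀ := x₀) (L := 2 * r) (c := c) (r := r)
    (hu3.of_le (by norm_num))
  have hlin := ((HasPartialsAt.snd z).sub (HasPartialsAt.const y₀ z)).const_mul
    (r ^ 2 / (yb - y₀))
  have hsub := divergence_sub
    ((hcut.mul (contDiffAt_gradFlux₁ hu3 h13)).differentiableAt one_ne_zero)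
    ((hcut.mul (contDiffAt_gradFlux₂ (s := 1 - r ^ 2) hu3 h13)).differentiableAt one_ne_zero)
    (differentiableAt_const 0) hlin.differentiableAt
  simp only [sub_zero] at hsub
  rw [hsub, hu.divergence_cutoff_mul_gradFlux hz, divergence, hlin.pdy_eq,
    (HasPartialsAt.const 0 z).pdx_eq, cutoffSlope, slabDensity]
  ring

lemma IsTranslatorOn.bump_mul_slabDensity_le (hu : IsTranslatorOn Ω u) (hz : Ω ∈ 𝓝 z)
    {κ : ℝ} (hr : 0 < r) (hκ : 0 < κ) (hx : |z.1 - x₀| ≤ 2 * r) :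
    bump x₀ (2 * r) z.1 / r * slabDensity u c r z ≤
      divergence (fun y => cutoff u x₀ (2 * r) c r y * gradFlux₁ u y)
        (fun y => cutoff u x₀ (2 * r) c r y * gradFlux₂ (1 - r ^ 2) u y
          - r ^ 2 / (yb - y₀) * (y.2 - y₀)) z
        + (3 / r * (κ + normalDefect u z / κ) + r ^ 2 / (yb - y₀)) := by
  have hW := areaElement_pos u z
  have hsource : 0 ≤ cutoff u x₀ (2 * r) c r z / areaElement u z :=
    div_nonneg (cutoff_nonneg _ _ _ _ _ _) hW.le
  have hcross : |ramp ((u z - c) / r + 2) * (bumpDeriv x₀ (2 * r) z.1 * gradFlux₁ u z)| ≤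
      1 * (2 / r * (κ + normalDefect u z / κ)) := by
    rw [abs_mul, abs_mul, abs_of_nonneg (ramp_nonneg _)]
    gcongr
    exacts [ramp_le_one _, abs_bumpDeriv_le hr hx,
      abs_le_add_div_of_sq_le hκ (gradFlux₁_sq_le u z)]
  have hloss : cutoffSlope u x₀ (2 * r) c r z * (1 / areaElement u z) ≤
      1 / r * (κ + normalDefect u z / κ) := by
    gcongr
    exacts [cutoffSlope_le hr.le,
      (le_abs_self _).trans (abs_le_add_div_of_sq_le hκ (one_div_areaElement_sq_le u z))]
  rw [hu.divergence_slab hz, show 3 / r * (κ + normalDefect u z / κ) =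
    2 / r * (κ + normalDefect u z / κ) + 1 / r * (κ + normalDefect u z / κ) by ring]
  linarith [(abs_le.1 hcross).1]

lemma IsTranslatorOn.integral_slab_error (hu : IsTranslatorOn Ω u) {κ : ℝ} (hr : 0 < r)
    (hy : y₀ < yb) (hΩ : ∀ z ∈ Icc (x₀ - 2 * r) (x₀ + 2 * r) ×ˢ Icc y₀ yb, Ω ∈ 𝓝 z) :
    ∫ z in Icc (x₀ - 2 * r) (x₀ + 2 * r) ×ˢ Icc y₀ yb,
        (3 / r * (κ + normalDefect u z / κ) + r ^ 2 / (yb - y₀)) =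
      12 * κ * (yb - y₀) + 4 * r ^ 3
        + 3 / (r * κ) * ∫ z in Icc (x₀ - 2 * r) (x₀ + 2 * r) ×ˢ Icc y₀ yb, normalDefect u z := by
  have hd := integrableOn_Icc_prod_Icc (hu.continuousOn_normalDefect hΩ)
  have hy' : yb - y₀ ≠ 0 := (sub_pos.2 hy).ne'
  calc _ = ∫ z in Icc (x₀ - 2 * r) (x₀ + 2 * r) ×ˢ Icc y₀ yb,
        ((3 / r * κ + r ^ 2 / (yb - y₀)) + 3 / (r * κ) * normalDefect u z) := by
        refine integral_congr_ae (ae_of_all _ fun z => ?_)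
        ring
    _ = _ := by
      rw [integral_add (integrableOn_Icc_prod_Icc continuousOn_const) (hd.const_mul _),
        integral_const_mul, setIntegral_const, volume_real_Icc_prod_Icc (by linarith) hy.le,
        smul_eq_mul]
      field_simp
      ring

/-- Here the gain from the cutoff in `u` is kept, and subtracting the linear function
`r ^ 2 (y - y₀) / (yb - y₀)` pays for the flux of `(0, r ^ 2)` through the top. -/
lemma IsTranslatorOn.integral_slabDensity_le (hu : IsTranslatorOn Ω u) {κ : ℝ} (hr : 0 < r)
    (hr1 : r ≤ 1) (hκ : 0 < κ) (hy₀ : y₀ < yb) (hya : y₀ ≤ ya)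
    (hΩ : ∀ z ∈ Icc (x₀ - 2 * r) (x₀ + 2 * r) ×ˢ Icc y₀ yb, Ω ∈ 𝓝 z)
    (hbot : ∀ x ∈ Icc (x₀ - 2 * r) (x₀ + 2 * r), u (x, y₀) ≤ c - 2 * r) :
    ∫ z in Icc (x₀ - r) (x₀ + r) ×ˢ Icc ya yb, slabDensity u c r z ≤
      64 / 3 * r * κ * (yb - y₀) + 64 / 9 * r ^ 4 + 16 / (3 * κ) *
        ∫ z in Icc (x₀ - 2 * r) (x₀ + 2 * r) ×ˢ Icc y₀ yb, normalDefect u z := by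
  have h2r : 0 < 2 * r := by positivity
  have hBR : Icc (x₀ - r) (x₀ + r) ×ˢ Icc ya yb ⊆
      Icc (x₀ - 2 * r) (x₀ + 2 * r) ×ˢ Icc y₀ yb :=
    prod_mono (Icc_subset_Icc (by linarith) (by linarith)) (Icc_subset_Icc hya le_rfl)
  have hu3 (z) (hz : z ∈ Icc (x₀ - 2 * r) (x₀ + 2 * r) ×ˢ Icc y₀ yb) := hu.contDiffAt (hΩ z hz)
  have h13 : (1 : WithTop ℕ∞) + 1 ≤ 3 := by norm_num
  have hcut (z) (hz : z ∈ Icc (x₀ - 2 * r) (x₀ + 2 * r) ×ˢ Icc y₀ yb) :=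
    contDiffAt_cutoff (x₀ := x₀) (L := 2 * r) (c := c) (r := r) ((hu3 z hz).of_le (by norm_num))
  have hpointwise (z) (hz : z ∈ Icc (x₀ - 2 * r) (x₀ + 2 * r) ×ˢ Icc y₀ yb) :=
    hu.bump_mul_slabDensity_le (c := c) (y₀ := y₀) (yb := yb) (hΩ z hz) hr hκ (abs_fst_sub_le hz)
  have hmain := setIntegral_le_of_le_divergence_add
    (g := fun z => 9 / (16 * r) * slabDensity u c r z)
    (K := fun z => 3 / r * (κ + normalDefect u z / κ) + r ^ 2 / (yb - y₀))
    (by linarith : x₀ - 2 * r ≤ x₀ + 2 * r) hy₀.le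
    (fun z hz => (hcut z hz).mul (contDiffAt_gradFlux₁ (hu3 z hz) h13))
    (fun z hz => ((hcut z hz).mul (contDiffAt_gradFlux₂ (hu3 z hz) h13)).sub
      (contDiffAt_const.mul (contDiffAt_snd.sub contDiffAt_const)))
    (fun y _ => by simp [cutoff_left h2r]) (fun y _ => by simp [cutoff_right h2r])
    (fun x hx => by simp [cutoff_of_le hr (hbot x hx)])
    (fun x _ => by
      rw [div_mul_cancel₀ _ (sub_pos.2 hy₀).ne']
      exact sub_nonpos.2 (cutoff_mul_gradFlux₂_le _))
    (measurableSet_Icc.prod measurableSet_Icc) hBR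
    ((integrableOn_Icc_prod_Icc
      (hu.continuousOn_slabDensity fun z hz => hΩ z (hBR hz))).const_mul _)
    (continuousOn_const.mul (continuousOn_const.add
      ((hu.continuousOn_normalDefect hΩ).div_const κ)) |>.add continuousOn_const)
    (fun z hz => (mul_nonneg (div_nonneg (bump_nonneg _ _ _) hr.le)
      (slabDensity_nonneg hr.le hr1)).trans (hpointwise z hz))
    (fun z hz => (mul_le_mul_of_nonneg_right (nine_div_le_bump_div hr (abs_fst_sub_le hz))
      (slabDensity_nonneg hr.le hr1)).trans (hpointwise z (hBR hz)))
  rw [integral_const_mul, hu.integral_slab_error hr hy₀ hΩ] at hmain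
  have := mul_le_mul_of_nonneg_left hmain (show 0 ≤ 16 / 9 * r by positivity)
  field_simp at this ⊢
  linarith

end FluxEstimates

section HalfStrip

variable {u : ℝ × ℝ → ℝ} {w x₀ L c r ya yb a b : ℝ}

lemma isOpen_THalfStrip (w : ℝ) : IsOpen (THalfStrip w) :=
  (isOpen_lt continuous_const continuous_fst).inter
    ((isOpen_lt continuous_const continuous_snd).inter (isOpen_lt continuous_snd continuous_const))

lemma THalfStrip_mem_nhds {d : ℝ} {z : ℝ × ℝ} (ha : 0 < a) (hc : 0 < c) (hd : d < w)
    (hz : z ∈ Icc a b ×ˢ Icc c d) : THalfStrip w ∈ 𝓝 z :=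
  (isOpen_THalfStrip w).mem_nhds
    ⟨ha.trans_le hz.1.1, hc.trans_le hz.2.1, hz.2.2.trans_lt hd⟩

lemma eventually_forall_mem_of_tendsto {l : Filter ℝ} {t : ℝ} {K : Set ℝ} {S : Set (ℝ × ℝ)}
    (hK : IsCompact K) (h : ∀ x ∈ K, Tendsto u (𝓝[S] (x, t)) l) {T : Set ℝ} (hT : T ∈ l) :
    ∀ᶠ y in 𝓝 t, ∀ x ∈ K, (x, y) ∈ S → u (x, y) ∈ T := by
  refine hK.eventually_forall_of_forall_eventually fun x hx => ?_
  have hT' := h x hx hT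
  rw [mem_map, mem_nhdsWithin_iff_eventually] at hT'
  exact ((continuous_snd.prodMk continuous_fst).tendsto (t, x)).eventually hT'

lemma exists_forall_lt_of_tendsto_atBot {ym : ℝ}
    (h₀ : ∀ x, 0 < x → Tendsto u (𝓝[THalfStrip w] (x, 0)) atBot)
    (ha : 0 < a) (hym : 0 < ym) (hymw : ym ≤ w) (M : ℝ) :
    ∃ y ∈ Ioo 0 ym, ∀ x ∈ Icc a b, u (x, y) < M := by
  have hsmall : ∀ᶠ y in 𝓝[>] (0 : ℝ), ∀ x ∈ Icc a b, (x, y) ∈ THalfStrip w → u (x, y) < M :=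
    nhdsWithin_le_nhds (eventually_forall_mem_of_tendsto isCompact_Icc
      (fun x hx => h₀ x (ha.trans_le hx.1)) (Iio_mem_atBot M))
  obtain ⟨y, hyu, hy⟩ := (hsmall.and (Ioo_mem_nhdsGT hym)).exists
  exact ⟨y, hy, fun x hx => hyu x hx ⟨ha.trans_le hx.1, hy.1, hy.2.trans_le hymw⟩⟩

lemma exists_forall_gt_of_tendsto_atTop {ym : ℝ}
    (h₁ : ∀ x, 0 < x → Tendsto u (𝓝[THalfStrip w] (x, w)) atTop)
    (ha : 0 < a) (hym : 0 ≤ ym) (hymw : ym < w) (M : ℝ) :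
    ∃ y ∈ Ioo ym w, ∀ x ∈ Icc a b, M < u (x, y) := by
  have hlarge : ∀ᶠ y in 𝓝[<] w, ∀ x ∈ Icc a b, (x, y) ∈ THalfStrip w → M < u (x, y) :=
    nhdsWithin_le_nhds (eventually_forall_mem_of_tendsto isCompact_Icc
      (fun x hx => h₁ x (ha.trans_le hx.1)) (Ioi_mem_atTop M))
  obtain ⟨y, hyu, hy⟩ := (hlarge.and (Ioo_mem_nhdsLT hymw)).exists
  exact ⟨y, hy, fun x hx => hyu x hx ⟨ha.trans_le hx.1, hym.trans_lt hy.1, hy.2⟩⟩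

lemma IsTranslatorOn.integral_normalDefect_halfStrip_le (hu : IsTranslatorOn (THalfStrip w) u)
    (h₀ : ∀ x, 0 < x → Tendsto u (𝓝[THalfStrip w] (x, 0)) atBot)
    (hL : 0 < L) (hLx : L < x₀) (hya : 0 < ya) (hab : ya ≤ yb) (hyb : yb < w) :
    ∫ z in Icc (x₀ - L / 2) (x₀ + L / 2) ×ˢ Icc ya yb, normalDefect u z ≤ 242 * w ^ 3 / L := by
  have hw : 0 < w := by linarith
  obtain ⟨M, hM⟩ : BddBelow (u '' (Icc (x₀ - L / 2) (x₀ + L / 2) ×ˢ Icc ya yb)) :=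
    (isCompact_Icc.prod isCompact_Icc).bddBelow_image fun z hz =>
      (hu.contDiffAt (THalfStrip_mem_nhds (by linarith) hya hyb
        hz)).continuousAt.continuousWithinAt
  let N := max (-M) (L ^ 2 / w)
  have hN : L ^ 2 ≤ N * w := (div_le_iff₀ hw).1 (le_max_right _ _)
  have hN0 : 0 < N := (by positivity : 0 < L ^ 2 / w).trans_le (le_max_right _ _)
  obtain ⟨y₀, hy₀, hbot⟩ := exists_forall_lt_of_tendsto_atBot (a := x₀ - L) (b := x₀ + L) h₀
    (by linarith) hya (hab.trans hyb.le) (0 - 2 * N)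
  refine hu.integral_normalDefect_le hL hN0 hN hy₀.2.le hab (by linarith [hy₀.1])
    (fun z => THalfStrip_mem_nhds (by linarith) hy₀.1 hyb) (fun x hx => (hbot x hx).le)
    fun z hz => ?_
  linarith [hM (mem_image_of_mem u hz), le_max_left (-M) (L ^ 2 / w)]

lemma IsTranslatorOn.integral_slabDensity_halfStrip_le (hu : IsTranslatorOn (THalfStrip w) u)
    (h₀ : ∀ x, 0 < x → Tendsto u (𝓝[THalfStrip w] (x, 0)) atBot) {κ : ℝ}
    (hr : 0 < r) (hr1 : r ≤ 1) (hκ : 0 < κ) (hrL : 4 * r ≤ L) (hLx : L < x₀)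
    (hya : 0 < ya) (hab : ya ≤ yb) (hyb : yb < w) :
    ∫ z in Icc (x₀ - r) (x₀ + r) ×ˢ Icc ya yb, slabDensity u c r z ≤
      64 / 3 * κ * w + 16 / (3 * κ) * (242 * w ^ 3 / L) + 8 * r ^ 4 := by
  obtain ⟨y₀, hy₀, hbot⟩ := exists_forall_lt_of_tendsto_atBot (a := x₀ - 2 * r) (b := x₀ + 2 * r)
    h₀ (by linarith) hya (hab.trans hyb.le) (c - 2 * r)
  have hdefect : ∫ z in Icc (x₀ - 2 * r) (x₀ + 2 * r) ×ˢ Icc y₀ yb, normalDefect u z ≤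
      242 * w ^ 3 / L := by
    refine (setIntegral_mono_set (integrableOn_Icc_prod_Icc (hu.continuousOn_normalDefect
      fun z => THalfStrip_mem_nhds (by linarith) hy₀.1 hyb))
      (ae_of_all _ fun z => normalDefect_nonneg u z) (Set.prod_mono (Icc_subset_Icc (by linarith)
      (by linarith)) Subset.rfl).eventuallyLE).trans
      (hu.integral_normalDefect_halfStrip_le (x₀ := x₀) (L := L) h₀ (by linarith) hLx hy₀.1
        (hy₀.2.le.trans hab) hyb)
  calc _ ≤ 64 / 3 * r * κ * (yb - y₀) + 64 / 9 * r ^ 4 + 16 / (3 * κ) *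
        ∫ z in Icc (x₀ - 2 * r) (x₀ + 2 * r) ×ˢ Icc y₀ yb, normalDefect u z :=
        hu.integral_slabDensity_le hr hr1 hκ (hy₀.2.trans_le hab) hy₀.2.le
          (fun z => THalfStrip_mem_nhds (by linarith) hy₀.1 hyb) fun x hx => (hbot x hx).le
    _ ≤ 64 / 3 * 1 * κ * w + 8 * r ^ 4 + 16 / (3 * κ) * (242 * w ^ 3 / L) := by
        have hyw : yb - y₀ ≤ w := by linarith [hy₀.1]
        have hy : 0 ≤ yb - y₀ := by linarith [hy₀.2]
        gcongr
        norm_num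
    _ = _ := by ring

lemma IsTranslatorOn.eventually_integral_slabDensity_le (hu : IsTranslatorOn (THalfStrip w) u)
    (h₀ : ∀ x, 0 < x → Tendsto u (𝓝[THalfStrip w] (x, 0)) atBot) {ε : ℝ}
    (hw : 0 < w) (hr : 0 < r) (hr1 : r ≤ 1) (hε : 0 < ε) :
    ∀ᶠ x₀ in atTop, ∀ c ya yb, 0 < ya → ya ≤ yb → yb < w →
      ∫ z in Icc (x₀ - r) (x₀ + r) ×ˢ Icc ya yb, slabDensity u c r z ≤ ε + 8 * r ^ 4 := by
  let κ := ε / (64 * w)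
  have hκ : 0 < κ := by positivity
  have hκw : 64 / 3 * κ * w = ε / 3 := by
    simp only [κ]
    field_simp
  have htail : Tendsto (fun x₀ : ℝ => 16 / (3 * κ) * (242 * w ^ 3 / (x₀ / 2))) atTop (𝓝 0) := by
    simpa using (tendsto_const_nhds.div_atTop (tendsto_id.atTop_div_const zero_lt_two)).const_mul
      (16 / (3 * κ))
  filter_upwards [htail.eventually_lt_const (half_pos hε), eventually_ge_atTop (8 * r)]
    with x₀ htail_lt hx₀ c ya yb hya hab hyb
  have := hu.integral_slabDensity_halfStrip_le (x₀ := x₀) (L := x₀ / 2) (c := c) h₀ hr hr1 hκ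
    (by linarith) (by linarith) hya hab hyb
  linarith

end HalfStrip

section Kernel

variable {r δ s : ℝ}

/-- The cutoff, in the squared distance `s`, at the distance `r`. -/
def taper (r s : ℝ) : ℝ := max (1 - s / r ^ 2) 0

/-- Minus the derivative of `truncKernel`. With `t = √(s + δ ^ 2)` its first factor is
`t⁻² + 2 t⁻¹`: the leading term makes the kernel behave like `-2 log t`, and the second one absorbs
the lower-order terms of the operator. -/
def truncKernelRate (r δ s : ℝ) : ℝ :=
  (1 / (s + δ ^ 2) + 2 / √(s + δ ^ 2)) * taper r s ^ 2

/-- The derivative of `truncKernelRate`. -/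
def truncKernelRateDeriv (r δ s : ℝ) : ℝ :=
  -(1 / (s + δ ^ 2) ^ 2 + 1 / ((s + δ ^ 2) * √(s + δ ^ 2))) * taper r s ^ 2
    - (1 / (s + δ ^ 2) + 2 / √(s + δ ^ 2)) * (2 / r ^ 2 * taper r s)

/-- A kernel which, composed with the squared distance in `ℝ³` to a point of the graph, is a
fundamental solution regularized at scale `δ` and truncated at distance `r`. -/
def truncKernel (r δ s : ℝ) : ℝ := -∫ t in (r ^ 2)..s, truncKernelRate r δ t

/-- The part of minus the image of the kernel under the operator that concentrates at the pole: an
approximate Dirac mass as `δ → 0`. -/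
def kernelPeak (r δ s : ℝ) : ℝ := 4 * taper r s ^ 2 * δ ^ 2 / (s + δ ^ 2) ^ 2

lemma taper_nonneg (r s : ℝ) : 0 ≤ taper r s := le_max_right _ _

lemma taper_le_one (hs : 0 ≤ s) : taper r s ≤ 1 :=
  max_le (sub_le_self 1 (by positivity)) zero_le_one

lemma taper_of_sq_le (hr : 0 < r) (hs : r ^ 2 ≤ s) : taper r s = 0 :=
  max_eq_right (sub_nonpos.2 ((one_le_div₀ (by positivity)).2 hs))

lemma hasDerivAt_taper_sq (r s : ℝ) :
    HasDerivAt (fun t => taper r t ^ 2) (-(2 / r ^ 2 * taper r s)) s := by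
  refine ((hasDerivAt_max_zero_sq (1 - s / r ^ 2)).comp s
    (((hasDerivAt_id s).div_const (r ^ 2)).const_sub 1)).congr_deriv ?_
  rw [taper]
  ring

lemma contDiff_taper_sq (r : ℝ) : ContDiff ℝ 1 fun s => taper r s ^ 2 :=
  contDiff_max_zero_sq.comp (contDiff_const.sub (contDiff_id.div_const (r ^ 2)))

lemma hasDerivAt_truncKernelRate (hs : 0 < s + δ ^ 2) :
    HasDerivAt (truncKernelRate r δ) (truncKernelRateDeriv r δ s) s := by
  have hsqrt : 0 < √(s + δ ^ 2) := Real.sqrt_pos.2 hs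
  have hsq : √(s + δ ^ 2) ^ 2 = s + δ ^ 2 := Real.sq_sqrt hs.le
  have hadd : HasDerivAt (fun t : ℝ => t + δ ^ 2) 1 s := (hasDerivAt_id s).add_const _
  refine ((((hasDerivAt_const s (1 : ℝ)).fun_div hadd hs.ne').fun_add
    ((hasDerivAt_const s (2 : ℝ)).fun_div (hadd.sqrt hs.ne') hsqrt.ne')).fun_mul
    (hasDerivAt_taper_sq r s)).congr_deriv ?_
  rw [truncKernelRateDeriv, hsq]
  field_simp
  ring

lemma contDiffAt_truncKernelRate (hs : 0 < s + δ ^ 2) :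
    ContDiffAt ℝ 1 (truncKernelRate r δ) s := by
  have hadd : ContDiffAt ℝ 1 (fun t : ℝ => t + δ ^ 2) s := contDiffAt_id.add contDiffAt_const
  exact ((contDiffAt_const.div hadd hs.ne').add (contDiffAt_const.div (hadd.sqrt hs.ne')
    (Real.sqrt_pos.2 hs).ne')).mul (contDiff_taper_sq r).contDiffAt

lemma truncKernelRate_nonneg (hs : 0 ≤ s) : 0 ≤ truncKernelRate r δ s := by
  rw [truncKernelRate]
  positivity

lemma truncKernelRate_of_sq_le (hr : 0 < r) (hs : r ^ 2 ≤ s) : truncKernelRate r δ s = 0 := by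
  simp [truncKernelRate, taper_of_sq_le hr hs]

lemma hasDerivAt_truncKernel (hδ : 0 < δ) (hs : -δ ^ 2 < s) :
    HasDerivAt (truncKernel r δ) (-truncKernelRate r δ s) s := by
  have hcont : ContinuousOn (truncKernelRate r δ) (Ioi (-δ ^ 2)) := fun t ht =>
    (contDiffAt_truncKernelRate (neg_lt_iff_pos_add.1 ht)).continuousAt.continuousWithinAt
  have hr : -δ ^ 2 < r ^ 2 := by linarith [sq_nonneg r, pow_pos hδ 2]
  exact (intervalIntegral.integral_hasDerivAt_right
    (hcont.mono (ordConnected_Ioi.uIcc_subset hr hs)).intervalIntegrable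
    (hcont.stronglyMeasurableAtFilter isOpen_Ioi s hs)
    (hcont.continuousAt (Ioi_mem_nhds hs))).neg

lemma contDiffAt_truncKernel (hδ : 0 < δ) (hs : -δ ^ 2 < s) :
    ContDiffAt ℝ 2 (truncKernel r δ) s := by
  have hon : ContDiffOn ℝ (1 + 1) (truncKernel r δ) (Ioi (-δ ^ 2)) := by
    rw [contDiffOn_succ_iff_deriv_of_isOpen isOpen_Ioi]
    refine ⟨fun t ht => (hasDerivAt_truncKernel hδ ht).differentiableAt.differentiableWithinAt,
      by simp, ContDiffOn.congr (fun t ht => ?_) fun t ht => (hasDerivAt_truncKernel hδ ht).deriv⟩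
    exact (contDiffAt_truncKernelRate (neg_lt_iff_pos_add.1 ht)).neg.contDiffWithinAt
  rw [one_add_one_eq_two] at hon
  exact hon.contDiffAt (Ioi_mem_nhds hs)

lemma truncKernel_of_sq_le (hr : 0 < r) (hs : r ^ 2 ≤ s) : truncKernel r δ s = 0 := by
  rw [truncKernel, neg_eq_zero]
  refine intervalIntegral.integral_zero_ae (ae_of_all _ fun t ht => ?_)
  rw [uIoc_of_le hs] at ht
  exact truncKernelRate_of_sq_le hr ht.1.le

lemma truncKernel_nonneg (hr : 0 < r) (hs : 0 ≤ s) : 0 ≤ truncKernel r δ s := by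
  rcases le_total (r ^ 2) s with h | h
  · exact (truncKernel_of_sq_le hr h).ge
  · rw [truncKernel, ← intervalIntegral.integral_symm]
    exact intervalIntegral.integral_nonneg h fun t ht => truncKernelRate_nonneg (hs.trans ht.1)

lemma untapered_rate_le {A G ζ t : ℝ} (ht : 0 < t) (ht2 : t ≤ 1 / 2) (hA : 0 ≤ A)
    (hG : G ≤ 4 * (t ^ 2 - δ ^ 2) * A) (hζ : -t ≤ ζ) :
    (1 / (t ^ 2) ^ 2 + 1 / (t ^ 2 * t)) * G - (1 / t ^ 2 + 2 / t) * (A * (4 + 2 * ζ)) ≤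
      -(4 * δ ^ 2 / (t ^ 2) ^ 2 * A) := by
  have hfactor : 0 ≤ 2 * t * ζ + 4 * t ^ 2 + 4 * t ^ 2 * ζ + 4 * δ ^ 2 := by
    have h₁ : 0 ≤ t * (ζ + t) := mul_nonneg ht.le (by linarith)
    have h₂ : 0 ≤ t ^ 2 * (ζ + 1 / 2) := mul_nonneg (sq_nonneg t) (by linarith)
    linarith [sq_nonneg δ]
  calc _ ≤ (1 / (t ^ 2) ^ 2 + 1 / (t ^ 2 * t)) * (4 * (t ^ 2 - δ ^ 2) * A)
        - (1 / t ^ 2 + 2 / t) * (A * (4 + 2 * ζ)) := by gcongr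
    _ = -(4 * δ ^ 2 / (t ^ 2) ^ 2 * A)
        - A / t ^ 3 * (2 * t * ζ + 4 * t ^ 2 + 4 * t ^ 2 * ζ + 4 * δ ^ 2) := by
      field_simp
      ring
    _ ≤ _ := sub_le_self _ (by positivity)

lemma taper_deriv_rate_le {A G t : ℝ} (ht : 0 < t) (ht2 : t ≤ 1 / 2) (hA : 0 ≤ A)
    (hG : G ≤ 4 * t ^ 2 * A) : (1 / t ^ 2 + 2 / t) * G ≤ 8 * A := by
  calc (1 / t ^ 2 + 2 / t) * G ≤ (1 / t ^ 2 + 2 / t) * (4 * t ^ 2 * A) := by gcongr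
    _ = 4 * (1 + 2 * t) * A := by field_simp
    _ ≤ 4 * (1 + 2 * (1 / 2)) * A := by gcongr
    _ = 8 * A := by ring

/-- Here `A (4 + 2 ζ)` and `G` stand for the image under the operator and for the squared gradient
of the squared distance `s`. -/
lemma truncKernel_operator_le {A G ζ : ℝ} (hr : 0 < r) (hr4 : r ≤ 1 / 4) (hδ : 0 < δ)
    (hδ4 : δ ≤ 1 / 4) (hs : 0 ≤ s) (hA : 0 ≤ A) (hG : G ≤ 4 * s * A) (hζ : ζ ^ 2 ≤ s) :
    -truncKernelRate r δ s * (A * (4 + 2 * ζ)) + -truncKernelRateDeriv r δ s * G ≤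
      A * (-kernelPeak r δ s + 16 / r ^ 2 * taper r s) := by
  rcases le_total (r ^ 2) s with h | h
  · simp [truncKernelRate, truncKernelRateDeriv, kernelPeak, taper_of_sq_le hr h]
  have hD : 0 < s + δ ^ 2 := by positivity
  obtain ⟨t, ht, hts, hsqrt⟩ : ∃ t, 0 < t ∧ t ^ 2 = s + δ ^ 2 ∧ √(s + δ ^ 2) = t :=
    ⟨_, Real.sqrt_pos.2 hD, Real.sq_sqrt hD.le, rfl⟩
  have ht2 : t ≤ 1 / 2 := by nlinarith
  have hζt : -t ≤ ζ :=
    (abs_le.1 (abs_le_of_sq_le_sq (by linarith [sq_nonneg δ] : ζ ^ 2 ≤ t ^ 2) ht.le)).1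
  have hfull := mul_le_mul_of_nonneg_left
    (untapered_rate_le (δ := δ) ht ht2 hA (hG.trans_eq (by rw [hts]; ring)) hζt)
    (sq_nonneg (taper r s))
  have hderiv := mul_le_mul_of_nonneg_left
    (taper_deriv_rate_le ht ht2 hA (hG.trans (by gcongr; linarith [sq_nonneg δ])))
    (mul_nonneg (by positivity : 0 ≤ 2 / r ^ 2) (taper_nonneg r s))
  rw [truncKernelRate, truncKernelRateDeriv, kernelPeak, hsqrt, ← hts]
  linear_combination hfull + hderiv

end Kernel

/-! ### A mean value inequality on the graph -/

/-- The squared distance in `ℝ³` between the points of the graph of `u` above `z` and above `p`. -/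
def sqDist (u : ℝ × ℝ → ℝ) (p z : ℝ × ℝ) : ℝ :=
  (z.1 - p.1) ^ 2 + (z.2 - p.2) ^ 2 + (u z - u p) ^ 2

/-- The integrand, with respect to Lebesgue measure on the base, of the mean value inequality for
the tilt at `p`. Adding `sqDist` to the tilt makes it a subsolution. -/
def taperedTilt (u : ℝ × ℝ → ℝ) (p : ℝ × ℝ) (r : ℝ) (z : ℝ × ℝ) : ℝ :=
  areaElement u z * (tilt u z + sqDist u p z) * taper r (sqDist u p z)

section SqDist

variable {u : ℝ × ℝ → ℝ} {p z : ℝ × ℝ} {r δ : ℝ}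

lemma sqDist_nonneg (u : ℝ × ℝ → ℝ) (p z : ℝ × ℝ) : 0 ≤ sqDist u p z := by
  rw [sqDist]
  positivity

lemma sqDist_self (u : ℝ × ℝ → ℝ) (p : ℝ × ℝ) : sqDist u p p = 0 := by simp [sqDist]

lemma sq_sub_le_sqDist (u : ℝ × ℝ → ℝ) (p z : ℝ × ℝ) : (u z - u p) ^ 2 ≤ sqDist u p z :=
  le_add_of_nonneg_left (by positivity)

lemma abs_sub_le_of_sqDist_le (hr : 0 ≤ r) (h : sqDist u p z ≤ r ^ 2) : |u z - u p| ≤ r :=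
  abs_le_of_sq_le_sq ((sq_sub_le_sqDist u p z).trans h) hr

lemma contDiffAt_sqDist {n : WithTop ℕ∞} (hu : ContDiffAt ℝ n u z) :
    ContDiffAt ℝ n (sqDist u p) z :=
  (((contDiffAt_fst.sub contDiffAt_const).pow 2).add
    ((contDiffAt_snd.sub contDiffAt_const).pow 2)).add ((hu.sub contDiffAt_const).pow 2)

lemma hasPartialsAt_sqDist (hu : DifferentiableAt ℝ u z) :
    HasPartialsAt (sqDist u p) (2 * (z.1 - p.1) + 2 * (u z - u p) * pdx u z)
      (2 * (z.2 - p.2) + 2 * (u z - u p) * pdy u z) z :=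
  ((((HasPartialsAt.fst z).sub (HasPartialsAt.const p.1 z)).sq.add
    ((HasPartialsAt.snd z).sub (HasPartialsAt.const p.2 z)).sq).add
    ((hasPartialsAt_of_differentiableAt hu).sub (HasPartialsAt.const (u p) z)).sq).congr_partials
    (by ring) (by ring)

lemma translatorForm_sqDist_le (hu : DifferentiableAt ℝ u z) :
    translatorForm u (sqDist u p) (sqDist u p) z ≤ 4 * sqDist u p z * areaElement u z ^ 2 := by
  have h := hasPartialsAt_sqDist (p := p) hu
  rw [translatorForm, h.pdx_eq, h.pdy_eq, areaElement_sq, sqDist]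
  linear_combination
    4 * sq_nonneg ((u z - u p) - pdx u z * (z.1 - p.1) - pdy u z * (z.2 - p.2))

lemma contDiffAt_truncKernel_sqDist (hδ : 0 < δ) (hu : ContDiffAt ℝ 2 u z) :
    ContDiffAt ℝ 2 (fun y => truncKernel r δ (sqDist u p y)) z :=
  (contDiffAt_truncKernel hδ (by linarith [sqDist_nonneg u p z, pow_pos hδ 2])).comp z
    (contDiffAt_sqDist hu)

lemma truncKernel_sqDist_eq_zero (hr : 0 < r) (hδ : 0 < δ) (hu : DifferentiableAt ℝ u z)
    (hz : r ^ 2 ≤ sqDist u p z) :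
    truncKernel r δ (sqDist u p z) = 0 ∧ pdx (fun y => truncKernel r δ (sqDist u p y)) z = 0 ∧
      pdy (fun y => truncKernel r δ (sqDist u p y)) z = 0 := by
  have h := (hasPartialsAt_sqDist (p := p) hu).comp (hasDerivAt_truncKernel (r := r) hδ
    (by linarith [sqDist_nonneg u p z, pow_pos hδ 2]))
  rw [h.pdx_eq, h.pdy_eq, truncKernelRate_of_sq_le hr hz]
  simp [truncKernel_of_sq_le hr hz]

lemma sq_le_sqDist_of_mem_frontier {c d x y : ℝ} (hr : 0 ≤ r)
    (hc : ∀ x ∈ Icc (p.1 - r) (p.1 + r), u (x, c) ≤ u p - r)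
    (hd : ∀ x ∈ Icc (p.1 - r) (p.1 + r), u p + r ≤ u (x, d))
    (hx : x ∈ Icc (p.1 - r) (p.1 + r))
    (hxy : x = p.1 - r ∨ x = p.1 + r ∨ y = c ∨ y = d) : r ^ 2 ≤ sqDist u p (x, y) := by
  have hfst (h : r ^ 2 = (x - p.1) ^ 2) : r ^ 2 ≤ sqDist u p (x, y) := by
    rw [h, sqDist, add_assoc]
    exact le_add_of_nonneg_right (by positivity)
  have hheight (h : r ≤ |u (x, y) - u p|) : r ^ 2 ≤ sqDist u p (x, y) :=
    (sq_le_sq.2 ((abs_of_nonneg hr).trans_le h)).trans (sq_sub_le_sqDist u p (x, y))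
  rcases hxy with h | h | rfl | rfl
  · exact hfst (by rw [h]; ring)
  · exact hfst (by rw [h]; ring)
  · exact hheight (le_abs.2 (Or.inr (by linarith [hc x hx])))
  · exact hheight (le_abs.2 (Or.inl (by linarith [hd x hx])))

end SqDist

section Kernel

variable {Ω : Set (ℝ × ℝ)} {u : ℝ × ℝ → ℝ} {p z : ℝ × ℝ} {r δ : ℝ}

lemma IsTranslatorOn.translatorOp_sqDist (hu : IsTranslatorOn Ω u) (hz : Ω ∈ 𝓝 z) :
    translatorOp u (sqDist u p) z = areaElement u z ^ 2 * (4 + 2 * (u z - u p)) := by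
  have hu2 : ContDiffAt ℝ 2 u z := (hu.contDiffAt hz).of_le (by norm_num)
  have hpartials : ∀ᶠ y in 𝓝 z, HasPartialsAt (sqDist u p)
      (2 * (y.1 - p.1) + 2 * (u y - u p) * pdx u y)
      (2 * (y.2 - p.2) + 2 * (u y - u p) * pdy u y) y :=
    (eventually_hasPartialsAt hu2).mono fun y h => hasPartialsAt_sqDist h.differentiableAt
  have hheight := ((eventually_hasPartialsAt hu2).self_of_nhds.sub
    (HasPartialsAt.const (u p) z)).const_mul 2
  have hself := hu.translatorOp_self (mem_of_mem_nhds hz)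
  rw [translatorOp_eq_of_hasPartialsAt hpartials
    ((((HasPartialsAt.fst z).sub (HasPartialsAt.const p.1 z)).const_mul 2).add
      (hheight.mul (hasPartialsAt_pdx hu2)))
    ((((HasPartialsAt.snd z).sub (HasPartialsAt.const p.2 z)).const_mul 2).add
      (hheight.mul (hasPartialsAt_pdy hu2)))]
  rw [translatorOp, areaElement_sq] at hself
  rw [areaElement_sq]
  linear_combination (2 * (u z - u p)) * hself

lemma IsTranslatorOn.translatorOp_truncKernel_sqDist_le (hu : IsTranslatorOn Ω u)
    (hz : Ω ∈ 𝓝 z) (hr : 0 < r) (hr4 : r ≤ 1 / 4) (hδ : 0 < δ) (hδ4 : δ ≤ 1 / 4) :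
    translatorOp u (fun y => truncKernel r δ (sqDist u p y)) z ≤ areaElement u z ^ 2 *
      (-kernelPeak r δ (sqDist u p z) + 16 / r ^ 2 * taper r (sqDist u p z)) := by
  have hu2 : ContDiffAt ℝ 2 u z := (hu.contDiffAt hz).of_le (by norm_num)
  have hs := sqDist_nonneg u p z
  have hδ2 := pow_pos hδ 2
  rw [translatorOp_comp (contDiffAt_sqDist hu2)
    ((eventually_gt_nhds (by linarith)).mono fun s hs => hasDerivAt_truncKernel (r := r) hδ hs)
    (hasDerivAt_truncKernelRate (by linarith)).neg, hu.translatorOp_sqDist hz]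
  exact truncKernel_operator_le hr hr4 hδ hδ4 hs (sq_nonneg _)
    (translatorForm_sqDist_le (hu2.differentiableAt (by norm_num))) (sq_sub_le_sqDist u p z)

lemma IsTranslatorOn.translatorOp_tilt_add_sqDist_nonneg (hu : IsTranslatorOn Ω u)
    (hz : Ω ∈ 𝓝 z) (hheight : |u z - u p| ≤ 1) :
    0 ≤ translatorOp u (fun y => tilt u y + sqDist u p y) z := by
  have hu3 := hu.contDiffAt hz
  rw [translatorOp_add (contDiffAt_tilt hu3 (by norm_num))
    (contDiffAt_sqDist (hu3.of_le (by norm_num))), hu.translatorOp_sqDist hz]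
  have htilt := hu.neg_two_le_translatorOp_tilt hz
  have harea : 1 ≤ areaElement u z ^ 2 := one_le_pow₀ (one_le_areaElement u z)
  have hfactor : 2 ≤ 4 + 2 * (u z - u p) := by linarith [(abs_le.1 hheight).1]
  linarith [mul_le_mul harea hfactor zero_le_two (zero_le_one.trans harea)]

lemma taperedTilt_nonneg (u : ℝ × ℝ → ℝ) (p : ℝ × ℝ) (r : ℝ) (z : ℝ × ℝ) :
    0 ≤ taperedTilt u p r z :=
  mul_nonneg (mul_nonneg (areaElement_pos u z).le
    (add_nonneg (tilt_pos u z).le (sqDist_nonneg u p z))) (taper_nonneg _ _)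

lemma IsTranslatorOn.continuousOn_taperedTilt {s : Set (ℝ × ℝ)} (hu : IsTranslatorOn Ω u)
    (hΩ : ∀ z ∈ s, Ω ∈ 𝓝 z) : ContinuousOn (taperedTilt u p r) s := fun z hz => by
  have hu3 := hu.contDiffAt (hΩ z hz)
  have h03 : (0 : WithTop ℕ∞) + 1 ≤ 3 := by norm_num
  have hs : ContinuousAt (sqDist u p) z := (contDiffAt_sqDist hu3).continuousAt
  exact (((contDiffAt_areaElement hu3 h03).continuousAt.mul
    ((contDiffAt_tilt hu3 h03).continuousAt.add hs)).mul
    ((continuousAt_const.sub (hs.div_const _)).max continuousAt_const)).continuousWithinAt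

lemma IsTranslatorOn.mul_kernelPeak_le (hu : IsTranslatorOn Ω u) (hz : Ω ∈ 𝓝 z) (hr : 0 < r)
    (hr4 : r ≤ 1 / 4) (hδ : 0 < δ) (hδ4 : δ ≤ 1 / 4) :
    exp (u z) * areaElement u z * (tilt u z + sqDist u p z) * kernelPeak r δ (sqDist u p z) ≤
      exp (u z) / areaElement u z * (truncKernel r δ (sqDist u p z) *
          translatorOp u (fun y => tilt u y + sqDist u p y) z
        - (tilt u z + sqDist u p z) *
          translatorOp u (fun y => truncKernel r δ (sqDist u p y)) z)
      + 16 / r ^ 2 * (exp (u z) * taperedTilt u p r z) := by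
  have hW := areaElement_pos u z
  have hs := sqDist_nonneg u p z
  have hfirst : 0 ≤ truncKernel r δ (sqDist u p z) *
      translatorOp u (fun y => tilt u y + sqDist u p y) z := by
    rcases le_total (r ^ 2) (sqDist u p z) with h | h
    · rw [truncKernel_of_sq_le hr h, zero_mul]
    · exact mul_nonneg (truncKernel_nonneg hr hs) (hu.translatorOp_tilt_add_sqDist_nonneg hz
        ((abs_sub_le_of_sqDist_le hr.le h).trans (by linarith)))
  have hsecond := mul_le_mul_of_nonneg_left
    (hu.translatorOp_truncKernel_sqDist_le (p := p) hz hr hr4 hδ hδ4)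
    (add_nonneg (tilt_pos u z).le hs)
  have hcombined := mul_le_mul_of_nonneg_left (sub_le_sub hfirst hsecond)
    (by positivity : 0 ≤ exp (u z) / areaElement u z)
  have harea : exp (u z) / areaElement u z * areaElement u z ^ 2 =
      exp (u z) * areaElement u z := by
    field_simp
  rw [taperedTilt]
  linear_combination hcombined + (tilt u z + sqDist u p z) *
    (-kernelPeak r δ (sqDist u p z) + 16 / r ^ 2 * taper r (sqDist u p z)) * harea

lemma IsTranslatorOn.volume_mul_le_setIntegral_taperedTilt {c d H : ℝ} {B : Set (ℝ × ℝ)}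
    (hu : IsTranslatorOn Ω u) (hr : 0 < r) (hr4 : r ≤ 1 / 4) (hδ : 0 < δ) (hδ4 : δ ≤ 1 / 4)
    (hcd : c ≤ d) (hΩ : ∀ z ∈ Icc (p.1 - r) (p.1 + r) ×ˢ Icc c d, Ω ∈ 𝓝 z)
    (hc : ∀ x ∈ Icc (p.1 - r) (p.1 + r), u (x, c) ≤ u p - r)
    (hd : ∀ x ∈ Icc (p.1 - r) (p.1 + r), u p + r ≤ u (x, d))
    (hB : MeasurableSet B) (hBR : B ⊆ Icc (p.1 - r) (p.1 + r) ×ˢ Icc c d)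
    (hH : ∀ z ∈ B, H ≤ exp (u z) * areaElement u z * (tilt u z + sqDist u p z) *
      kernelPeak r δ (sqDist u p z)) :
    volume.real B * H ≤ ∫ z in Icc (p.1 - r) (p.1 + r) ×ˢ Icc c d,
      16 / r ^ 2 * (exp (u z) * taperedTilt u p r z) := by
  have hu3 (z) (hz : z ∈ Icc (p.1 - r) (p.1 + r) ×ˢ Icc c d) := hu.contDiffAt (hΩ z hz)
  have hu2 (z) (hz : z ∈ Icc (p.1 - r) (p.1 + r) ×ˢ Icc c d) : ContDiffAt ℝ 2 u z :=
    (hu3 z hz).of_le (by norm_num)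
  have hBfin : volume B ≠ ⊤ :=
    measure_ne_top_of_subset hBR (isCompact_Icc.prod isCompact_Icc).measure_lt_top.ne
  rw [← smul_eq_mul, ← setIntegral_const]
  refine hu.setIntegral_le_of_le_green (f := fun z => tilt u z + sqDist u p z)
    (g := fun z => truncKernel r δ (sqDist u p z)) (by linarith) hcd hΩ
    (fun z hz => (contDiffAt_tilt (hu3 z hz) (by norm_num)).add (contDiffAt_sqDist (hu2 z hz)))
    (fun z hz => contDiffAt_truncKernel_sqDist hδ (hu2 z hz))
    (fun x hx y hy hxy => truncKernel_sqDist_eq_zero hr hδ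
      ((hu2 (x, y) ⟨hx, hy⟩).differentiableAt (by norm_num))
      (sq_le_sqDist_of_mem_frontier hr.le hc hd hx hxy))
    hB hBR (integrableOn_const hBfin) ?_ (fun z hz => ?_)
    (fun z hz => (hH z hz).trans (hu.mul_kernelPeak_le (hΩ z (hBR hz)) hr hr4 hδ hδ4))
  · exact continuousOn_const.mul (ContinuousOn.mul
      (fun z hz => (hu3 z hz).continuousAt.rexp.continuousWithinAt)
      (hu.continuousOn_taperedTilt hΩ))
  · have hs := sqDist_nonneg u p z
    have hW := areaElement_pos u z
    have htilt := tilt_pos u z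
    refine le_trans ?_ (hu.mul_kernelPeak_le (hΩ z hz) hr hr4 hδ hδ4)
    rw [kernelPeak]
    positivity

end Kernel

section Cell

lemma volume_real_regionBetween_sub_add {m : ℝ → ℝ} {a b c : ℝ} (hm : Continuous m)
    (hab : a ≤ b) (hc : 0 ≤ c) :
    volume.real (regionBetween (fun x => m x - c) (fun x => m x + c) (Icc a b)) =
      (b - a) * (2 * c) := by
  have hwidth (x : ℝ) : ((fun x => m x + c) - fun x => m x - c) x = 2 * c := by
    simp only [Pi.sub_apply]
    ring
  rw [Measure.real, Measure.volume_eq_prod, volume_regionBetween_eq_integral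
    (hm.fun_sub continuous_const).integrableOn_Icc (hm.fun_add continuous_const).integrableOn_Icc
    measurableSet_Icc (fun x _ => show m x - c ≤ m x + c by linarith)]
  simp only [hwidth]
  rw [setIntegral_const, Real.volume_real_Icc_of_le hab, smul_eq_mul, ENNReal.toReal_ofReal
    (mul_nonneg (sub_nonneg.2 hab) (by linarith))]

lemma sq_add_sq_add_sq_eq (α β h k : ℝ) :
    h ^ 2 + k ^ 2 + (α * h + β * k) ^ 2 = (1 + β ^ 2) * (k + α * β / (1 + β ^ 2) * h) ^ 2
      + (1 + α ^ 2 + β ^ 2) / (1 + β ^ 2) * h ^ 2 := by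
  field_simp
  ring

/-- The set is a parallelogram inscribed in the ellipse, found by completing the square in the
second variable. -/
lemma exists_measurableSet_quadratic_le (α β : ℝ) {δ : ℝ} (hδ : 0 ≤ δ) (p : ℝ × ℝ) :
    ∃ B : Set (ℝ × ℝ), MeasurableSet B ∧ volume.real B = δ ^ 2 / √(1 + α ^ 2 + β ^ 2) ∧
      ∀ z ∈ B, (z.1 - p.1) ^ 2 + (z.2 - p.2) ^ 2
        + (α * (z.1 - p.1) + β * (z.2 - p.2)) ^ 2 ≤ δ ^ 2 / 2 := by
  have hβ : 0 < 1 + β ^ 2 := by positivity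
  obtain ⟨W, hW, hWsq⟩ : ∃ W, W = √(1 + α ^ 2 + β ^ 2) ∧ W ^ 2 = 1 + α ^ 2 + β ^ 2 :=
    ⟨_, rfl, Real.sq_sqrt (by positivity)⟩
  obtain ⟨s, hs, hssq⟩ : ∃ s, 0 < s ∧ s ^ 2 = 1 + β ^ 2 :=
    ⟨_, Real.sqrt_pos.2 hβ, Real.sq_sqrt hβ.le⟩
  have hW₀ : 0 < W := hW ▸ Real.sqrt_pos.2 (by positivity)
  have hm : Continuous fun x => p.2 - α * β / (1 + β ^ 2) * (x - p.1) := by fun_prop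
  have hA : 0 ≤ δ * s / (2 * W) := by positivity
  rw [← hW]
  refine ⟨regionBetween _ _ (Icc (p.1 - δ * s / (2 * W)) (p.1 + δ * s / (2 * W))),
    measurableSet_regionBetween (hm.fun_sub continuous_const).measurable
      (hm.fun_add continuous_const).measurable measurableSet_Icc,
    (volume_real_regionBetween_sub_add hm (by linarith)
      (by positivity : 0 ≤ δ / (2 * s))).trans ?_, fun z hz => ?_⟩
  · field_simp
    ring
  · obtain ⟨⟨hz₁, hz₂⟩, hz₃, hz₄⟩ := hz
    calc _ = s ^ 2 * (z.2 - p.2 + α * β / (1 + β ^ 2) * (z.1 - p.1)) ^ 2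
          + W ^ 2 / s ^ 2 * (z.1 - p.1) ^ 2 := by rw [sq_add_sq_add_sq_eq, hssq, hWsq]
      _ ≤ s ^ 2 * (δ / (2 * s)) ^ 2 + W ^ 2 / s ^ 2 * (δ * s / (2 * W)) ^ 2 := by
        gcongr ?_ * ?_ + ?_ * ?_
        · exact sq_le_sq' (by linarith) (by linarith)
        · exact sq_le_sq' (by linarith) (by linarith)
      _ = δ ^ 2 / 2 := by
        field_simp
        norm_num

variable {u : ℝ × ℝ → ℝ} {p : ℝ × ℝ}

lemma sq_norm_sub_le (z p : ℝ × ℝ) : ‖z - p‖ ^ 2 ≤ (z.1 - p.1) ^ 2 + (z.2 - p.2) ^ 2 := by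
  rw [Prod.norm_def]
  rcases max_choice ‖(z - p).1‖ ‖(z - p).2‖ with h | h <;>
    rw [h, Real.norm_eq_abs, sq_abs]
  · exact le_add_of_nonneg_right (sq_nonneg _)
  · exact le_add_of_nonneg_left (sq_nonneg _)

lemma eventually_sqDist_le (hu : DifferentiableAt ℝ u p) :
    ∀ᶠ z in 𝓝 p, sqDist u p z ≤ 2 * ((z.1 - p.1) ^ 2 + (z.2 - p.2) ^ 2
      + (pdx u p * (z.1 - p.1) + pdy u p * (z.2 - p.2)) ^ 2) := by
  have hpartials : HasFDerivAt u _ p := hasPartialsAt_of_differentiableAt hu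
  filter_upwards [hpartials.isLittleO.bound (by norm_num : (0 : ℝ) < 1 / 2)] with z hz
  have herror : |u z - u p - (pdx u p * (z.1 - p.1) + pdy u p * (z.2 - p.2))| ≤
      1 / 2 * ‖z - p‖ := by
    simpa [Real.norm_eq_abs] using hz
  have herrorsq := sq_le_sq.2 (herror.trans (le_abs_self _))
  rw [sqDist]
  linear_combination 2 * herrorsq + 1 / 2 * sq_norm_sub_le z p
    + sq_nonneg (u z - u p - 2 * (pdx u p * (z.1 - p.1) + pdy u p * (z.2 - p.2)))
    + 1 / 2 * sq_nonneg (z.1 - p.1) + 1 / 2 * sq_nonneg (z.2 - p.2)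

lemma eventually_exists_measurableSet_sqDist_le {U : Set (ℝ × ℝ)}
    (hu : DifferentiableAt ℝ u p) (hU : U ∈ 𝓝 p) :
    ∀ᶠ δ in 𝓝[>] 0, ∃ B ⊆ U, MeasurableSet B ∧ volume.real B = δ ^ 2 / areaElement u p ∧
      ∀ z ∈ B, sqDist u p z ≤ δ ^ 2 := by
  obtain ⟨η, hη, hball⟩ := Metric.mem_nhds_iff.1 (inter_mem hU (eventually_sqDist_le hu))
  filter_upwards [Ioo_mem_nhdsGT hη] with δ hδ
  obtain ⟨B, hB, hvol, hquad⟩ :=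
    exists_measurableSet_quadratic_le (pdx u p) (pdy u p) hδ.1.le p
  have hmem (z) (hz : z ∈ B) : z ∈ U ∩ {z | sqDist u p z ≤ 2 * ((z.1 - p.1) ^ 2
      + (z.2 - p.2) ^ 2 + (pdx u p * (z.1 - p.1) + pdy u p * (z.2 - p.2)) ^ 2)} := by
    refine hball (mem_ball_iff_norm.2 (lt_of_le_of_lt ?_ hδ.2))
    refine (abs_le_of_sq_le_sq' ?_ hδ.1.le).2
    linarith [sq_norm_sub_le z p, hquad z hz, sq_nonneg δ,
      sq_nonneg (pdx u p * (z.1 - p.1) + pdy u p * (z.2 - p.2))]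
  exact ⟨B, fun z hz => (hmem z hz).1, hB, hvol,
    fun z hz => (hmem z hz).2.trans (by linarith [hquad z hz])⟩

end Cell

section MeanValue

variable {Ω : Set (ℝ × ℝ)} {u : ℝ × ℝ → ℝ} {p z : ℝ × ℝ} {r δ s : ℝ}

lemma one_div_le_kernelPeak (hδ : 0 < δ) (hs : 0 ≤ s) (hsδ : s ≤ δ ^ 2) (hsr : s ≤ r ^ 2 / 2) :
    1 / (4 * δ ^ 2) ≤ kernelPeak r δ s := by
  have htaper : 1 / 2 ≤ taper r s := by
    have hdiv : s / r ^ 2 ≤ 1 / 2 := div_le_of_le_mul₀ (sq_nonneg r) (by norm_num) (by linarith)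
    exact le_max_of_le_left (by linarith)
  calc 1 / (4 * δ ^ 2) = 4 * (1 / 2) ^ 2 * δ ^ 2 / (δ ^ 2 + δ ^ 2) ^ 2 := by
        field_simp
        norm_num
    _ ≤ kernelPeak r δ s := by
        rw [kernelPeak]
        gcongr

lemma exp_mul_taperedTilt_le (hr : 0 < r) (hr4 : r ≤ 1 / 4) :
    exp (u z) * taperedTilt u p r z ≤ 2 * exp (u p) * taperedTilt u p r z := by
  rcases le_total (r ^ 2) (sqDist u p z) with h | h
  · simp [taperedTilt, taper_of_sq_le hr h]
  · refine mul_le_mul_of_nonneg_right ?_ (taperedTilt_nonneg u p r z)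
    have hheight := (abs_le.1 (abs_sub_le_of_sqDist_le hr.le h)).2
    calc exp (u z) ≤ exp (Real.log 2 + u p) :=
          exp_le_exp.2 (by linarith [Real.log_two_gt_d9])
      _ = 2 * exp (u p) := by rw [exp_add, exp_log two_pos]

lemma eventually_exists_measurableSet_le_kernelPeak {U : Set (ℝ × ℝ)} (hu : ContDiffAt ℝ 1 u p)
    (hU : U ∈ 𝓝 p) (hr : 0 < r) :
    ∀ᶠ δ in 𝓝[>] 0, ∃ B ⊆ U, MeasurableSet B ∧ volume.real B = δ ^ 2 / areaElement u p ∧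
      ∀ z ∈ B, exp (u p) * areaElement u p * tilt u p / 2 * (1 / (4 * δ ^ 2)) ≤
        exp (u z) * areaElement u z * (tilt u z + sqDist u p z) *
          kernelPeak r δ (sqDist u p z) := by
  have h01 : (0 : WithTop ℕ∞) + 1 ≤ 1 := by norm_num
  have hsq : ContinuousAt (sqDist u p) p := (contDiffAt_sqDist hu).continuousAt
  have hdensity : ContinuousAt
      (fun z => exp (u z) * areaElement u z * (tilt u z + sqDist u p z)) p :=
    (hu.continuousAt.rexp.mul (contDiffAt_areaElement hu h01).continuousAt).mul
      ((contDiffAt_tilt hu h01).continuousAt.add hsq)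
  have hpos (z) : 0 < exp (u z) * areaElement u z * (tilt u z + sqDist u p z) :=
    mul_pos (mul_pos (exp_pos _) (areaElement_pos u z))
      (add_pos_of_pos_of_nonneg (tilt_pos u z) (sqDist_nonneg u p z))
  have hhalf : ∀ᶠ z in 𝓝 p, exp (u p) * areaElement u p * tilt u p / 2 <
      exp (u z) * areaElement u z * (tilt u z + sqDist u p z) :=
    hdensity.eventually_const_lt (by simpa [sqDist_self] using half_lt_self (hpos p))
  have hnear : ∀ᶠ z in 𝓝 p, sqDist u p z < r ^ 2 / 2 :=
    hsq.eventually_lt_const (by rw [sqDist_self]; positivity)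
  filter_upwards [eventually_exists_measurableSet_sqDist_le (hu.differentiableAt (by norm_num))
    (inter_mem hU (hnear.and hhalf)), self_mem_nhdsWithin] with δ ⟨B, hBU, hB, hvol, hBδ⟩ hδ
  exact ⟨B, fun z hz => (hBU hz).1, hB, hvol, fun z hz => mul_le_mul (hBU hz).2.2.le
    (one_div_le_kernelPeak hδ (sqDist_nonneg u p z) (hBδ z hz) (hBU hz).2.1.le)
    (by positivity) (hpos z).le⟩

lemma IsTranslatorOn.setIntegral_exp_mul_taperedTilt_le {a b c d : ℝ}
    (hu : IsTranslatorOn Ω u) (hr : 0 < r) (hr4 : r ≤ 1 / 4)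
    (hΩ : ∀ z ∈ Icc a b ×ˢ Icc c d, Ω ∈ 𝓝 z) :
    ∫ z in Icc a b ×ˢ Icc c d, 16 / r ^ 2 * (exp (u z) * taperedTilt u p r z) ≤
      exp (u p) * (32 / r ^ 2 * ∫ z in Icc a b ×ˢ Icc c d, taperedTilt u p r z) := by
  have hT : ContinuousOn (taperedTilt u p r) (Icc a b ×ˢ Icc c d) :=
    hu.continuousOn_taperedTilt hΩ
  have hexp : ContinuousOn (fun z => exp (u z)) (Icc a b ×ˢ Icc c d) := fun z hz =>
    (hu.contDiffAt (hΩ z hz)).continuousAt.rexp.continuousWithinAt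
  calc _ ≤ ∫ z in Icc a b ×ˢ Icc c d, 32 / r ^ 2 * exp (u p) * taperedTilt u p r z :=
        setIntegral_mono_on (integrableOn_Icc_prod_Icc (continuousOn_const.mul (hexp.mul hT)))
          ((integrableOn_Icc_prod_Icc hT).const_mul _) (measurableSet_Icc.prod measurableSet_Icc)
          fun z _ => (mul_le_mul_of_nonneg_left (exp_mul_taperedTilt_le hr hr4)
            (by positivity)).trans_eq (by ring)
    _ = _ := by
        rw [integral_const_mul]
        ring

/-- Let the scale `δ` of the kernel be small: over a cell of area `δ ^ 2 / W` at the center, the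
peak of size `δ⁻²` sees essentially the value of the tilt at the center. -/
lemma IsTranslatorOn.tilt_le_setIntegral_taperedTilt {c d : ℝ} (hu : IsTranslatorOn Ω u)
    (hr : 0 < r) (hr4 : r ≤ 1 / 4) (hcp : c < p.2) (hpd : p.2 < d)
    (hΩ : ∀ z ∈ Icc (p.1 - r) (p.1 + r) ×ˢ Icc c d, Ω ∈ 𝓝 z)
    (hc : ∀ x ∈ Icc (p.1 - r) (p.1 + r), u (x, c) ≤ u p - r)
    (hd : ∀ x ∈ Icc (p.1 - r) (p.1 + r), u p + r ≤ u (x, d)) :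
    tilt u p ≤ 256 / r ^ 2 * ∫ z in Icc (p.1 - r) (p.1 + r) ×ˢ Icc c d, taperedTilt u p r z := by
  have hbox : Icc (p.1 - r) (p.1 + r) ×ˢ Icc c d ∈ 𝓝 p :=
    prod_mem_nhds (Icc_mem_nhds (by linarith) (by linarith)) (Icc_mem_nhds hcp hpd)
  have hu1 : ContDiffAt ℝ 1 u p :=
    (hu.contDiffAt (hΩ p (mem_of_mem_nhds hbox))).of_le (by norm_num)
  obtain ⟨δ, ⟨B, hBR, hB, hvol, hpeak⟩, hδ, hδ4⟩ :=
    ((eventually_exists_measurableSet_le_kernelPeak hu1 hbox hr).and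
      (Ioo_mem_nhdsGT (by norm_num : (0 : ℝ) < 1 / 4))).exists
  have hbound : exp (u p) * (tilt u p / 8) ≤
      exp (u p) * (32 / r ^ 2 * ∫ z in Icc (p.1 - r) (p.1 + r) ×ˢ Icc c d, taperedTilt u p r z) :=
    calc exp (u p) * (tilt u p / 8) = volume.real B *
          (exp (u p) * areaElement u p * tilt u p / 2 * (1 / (4 * δ ^ 2))) := by
          have hW := areaElement_pos u p
          rw [hvol]
          field_simp
          ring
      _ ≤ ∫ z in Icc (p.1 - r) (p.1 + r) ×ˢ Icc c d,
            16 / r ^ 2 * (exp (u z) * taperedTilt u p r z) :=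
          hu.volume_mul_le_setIntegral_taperedTilt hr hr4 hδ hδ4.le (hcp.trans hpd).le hΩ hc hd
            hB hBR hpeak
      _ ≤ _ := hu.setIntegral_exp_mul_taperedTilt_le hr hr4 hΩ
  linear_combination 8 * le_of_mul_le_mul_left hbound (exp_pos (u p))

end MeanValue

/-! ### Smallness of the tilt far out in the half-strip -/

section Conclusion

variable {w r ε : ℝ} {u : ℝ × ℝ → ℝ}

lemma areaElement_mul_tilt_le (u : ℝ × ℝ → ℝ) (z : ℝ × ℝ) :
    areaElement u z * tilt u z ≤ areaElement u z - pdy u z := by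
  linarith [tilt_mul_areaElement_add_one u z, tilt_pos u z]

lemma taperedTilt_le_slabDensity (hr : 0 < r) (hr2 : r ≤ 1 / 2) (p z : ℝ × ℝ) :
    taperedTilt u p r z ≤ 100 * slabDensity u (u p) r z := by
  have hslab : 0 ≤ slabDensity u (u p) r z := slabDensity_nonneg hr.le (by linarith)
  rcases le_total (r ^ 2) (sqDist u p z) with h | h
  · simpa [taperedTilt, taper_of_sq_le hr h] using hslab
  have hs := sqDist_nonneg u p z
  have hW := areaElement_pos u z
  have htilt := tilt_pos u z
  have hheight := abs_le.1 (abs_sub_le_of_sqDist_le hr.le h)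
  have hramp : 1 / 50 ≤ rampDeriv ((u z - u p) / r + 2) := by
    refine one_div_fifty_le_rampDeriv ?_ ?_
    · linarith [(le_div_iff₀ hr).2 (by linarith [hheight.1] : -1 * r ≤ u z - u p)]
    · linarith [(div_le_iff₀ hr).2 (by linarith [hheight.2] : u z - u p ≤ 1 * r)]
  have hrsq : r ^ 2 ≤ 1 / 4 := by nlinarith
  have hq := abs_lt.1 (abs_pdy_lt_areaElement u z)
  have hweight : areaElement u z * (tilt u z + r ^ 2) ≤
      2 * (areaElement u z - (1 - r ^ 2) * pdy u z) := by
    have hdefect : 0 ≤ (1 - 2 * r ^ 2) * (areaElement u z - pdy u z) :=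
      mul_nonneg (by linarith) (by linarith)
    linarith [areaElement_mul_tilt_le u z, mul_nonneg (sq_nonneg r) hW.le]
  have hweight₀ : 0 ≤ areaElement u z - (1 - r ^ 2) * pdy u z := by
    linarith [mul_pos hW (add_pos_of_pos_of_nonneg htilt (sq_nonneg r))]
  calc taperedTilt u p r z ≤ areaElement u z * (tilt u z + r ^ 2) * 1 := by
        rw [taperedTilt]
        gcongr
        exacts [taper_nonneg _ _, taper_le_one hs]
    _ ≤ 100 * (1 / 50 * (areaElement u z - (1 - r ^ 2) * pdy u z)) := by linarith
    _ ≤ 100 * slabDensity u (u p) r z := by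
        rw [slabDensity]
        gcongr

lemma IsTranslatorOn.eventually_tilt_le (hu : IsTranslatorOn (THalfStrip w) u)
    (h₀ : ∀ x, 0 < x → Tendsto u (𝓝[THalfStrip w] (x, 0)) atBot)
    (h₁ : ∀ x, 0 < x → Tendsto u (𝓝[THalfStrip w] (x, w)) atTop)
    (hw : 0 < w) (hr : 0 < r) (hr4 : r ≤ 1 / 4) (hε : 0 < ε) :
    ∀ᶠ x in atTop, ∀ y ∈ Ioo 0 w, tilt u (x, y) ≤ 25600 / r ^ 2 * (ε + 8 * r ^ 4) := by
  filter_upwards [hu.eventually_integral_slabDensity_le h₀ hw hr (by linarith) hε,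
    eventually_gt_atTop r] with x hslab hx y hy
  obtain ⟨c, hc, hlow⟩ := exists_forall_lt_of_tendsto_atBot h₀ (b := x + r) (sub_pos.2 hx)
    hy.1 hy.2.le (u (x, y) - r)
  obtain ⟨d, hd, hhigh⟩ := exists_forall_gt_of_tendsto_atTop h₁ (b := x + r) (sub_pos.2 hx)
    hy.1.le hy.2 (u (x, y) + r)
  have hΩ (z) (hz : z ∈ Icc (x - r) (x + r) ×ˢ Icc c d) : THalfStrip w ∈ 𝓝 z :=
    THalfStrip_mem_nhds (sub_pos.2 hx) hc.1 hd.2 hz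
  calc tilt u (x, y) ≤ 256 / r ^ 2 *
        ∫ z in Icc (x - r) (x + r) ×ˢ Icc c d, taperedTilt u (x, y) r z :=
        hu.tilt_le_setIntegral_taperedTilt hr hr4 hc.2 hd.1 hΩ (fun t ht => (hlow t ht).le)
          fun t ht => (hhigh t ht).le
    _ ≤ 256 / r ^ 2 *
        ∫ z in Icc (x - r) (x + r) ×ˢ Icc c d, 100 * slabDensity u (u (x, y)) r z := by
        refine mul_le_mul_of_nonneg_left ?_ (by positivity)
        exact setIntegral_mono_on (integrableOn_Icc_prod_Icc (hu.continuousOn_taperedTilt hΩ))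
          ((integrableOn_Icc_prod_Icc (hu.continuousOn_slabDensity hΩ)).const_mul _)
          (measurableSet_Icc.prod measurableSet_Icc)
          fun z _ => taperedTilt_le_slabDensity hr (by linarith) (x, y) z
    _ = 25600 / r ^ 2 *
        ∫ z in Icc (x - r) (x + r) ×ˢ Icc c d, slabDensity u (u (x, y)) r z := by
        rw [integral_const_mul]
        ring
    _ ≤ 25600 / r ^ 2 * (ε + 8 * r ^ 4) := by
        gcongr
        exact hslab _ c d hc.1 (hc.2.trans hd.1).le hd.2

lemma normalDefect_le_two_mul_tilt (u : ℝ × ℝ → ℝ) (z : ℝ × ℝ) :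
    normalDefect u z ≤ 2 * tilt u z := by
  have hW := areaElement_pos u z
  calc normalDefect u z = tilt u z * (areaElement u z + 1) / areaElement u z := by
        rw [tilt_mul_areaElement_add_one, normalDefect, sub_div, div_self hW.ne']
    _ ≤ 2 * tilt u z := by
        rw [div_le_iff₀ hW]
        linarith [mul_le_mul_of_nonneg_left (one_le_areaElement u z) (tilt_pos u z).le]

end Conclusion

/-- with boundary value `−∞` on `y = 0` and `+∞` on `y = w`, the upward
unit normal of the graph converges uniformly to `(0,−1,0)` as `x → ∞`. -/
theorem halfstrip_normal_tendsto (w : ℝ) (hw : 0 < w) (u : ℝ × ℝ → ℝ)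
    (hu : IsTranslatorOn (THalfStrip w) u)
    (h0 : ∀ x : ℝ, 0 < x → Tendsto u (nhdsWithin (x, 0) (THalfStrip w)) atBot)
    (h1 : ∀ x : ℝ, 0 < x → Tendsto u (nhdsWithin (x, w) (THalfStrip w)) atTop) :
    ∀ ε > (0 : ℝ), ∃ a : ℝ, 0 < a ∧ ∀ x y : ℝ, a < x → 0 < y → y < w →
      Real.sqrt
        ((pdx u (x, y) / Real.sqrt (1 + (pdx u (x, y)) ^ 2 + (pdy u (x, y)) ^ 2)) ^ 2 +
         (1 - pdy u (x, y) / Real.sqrt (1 + (pdx u (x, y)) ^ 2 + (pdy u (x, y)) ^ 2)) ^ 2 +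
         (1 / Real.sqrt (1 + (pdx u (x, y)) ^ 2 + (pdy u (x, y)) ^ 2)) ^ 2) < ε := by
  intro ε hε
  obtain ⟨r, hr, hr4, hrε⟩ : ∃ r, 0 < r ∧ r ≤ 1 / 4 ∧ r ≤ ε / 1000 :=
    ⟨min (1 / 4) (ε / 1000), by positivity, min_le_left _ _, min_le_right _ _⟩
  obtain ⟨a, ha⟩ := eventually_atTop.1 (hu.eventually_tilt_le h0 h1 hw hr hr4 (pow_pos hr 4))
  refine ⟨max a 1, by positivity, fun x y hx hy hyw => (Real.sqrt_lt' hε).2 ?_⟩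
  calc _ = 2 * normalDefect u (x, y) := gradFlux₁_sq_add_normalDefect_sq_add u (x, y)
    _ ≤ 4 * tilt u (x, y) := by linarith [normalDefect_le_two_mul_tilt u (x, y)]
    _ ≤ 4 * (25600 / r ^ 2 * (r ^ 4 + 8 * r ^ 4)) := by
        gcongr
        exact ha x ((le_max_left _ _).trans hx.le) y ⟨hy, hyw⟩
    _ = 921600 * r ^ 2 := by
        field_simp
        norm_num
    _ ≤ 921600 * (ε / 1000) ^ 2 := by gcongr
    _ < ε ^ 2 := by linarith [pow_pos hε 2]
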